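/- arXiv:1504.01926 — 2 statements merged into one kernel-verified Lean document; each statement's English description precedes it below -/
import Mathlib

section
/- There exists ϑ ∈ (0,1), depending only on λ and A*, such that for every L > 0 there is a constant C > 0 (depending only on L, λ, A*) with the following property: for every z ∈ 𝕊, every function g : 𝕊 → ℝ that is Lipschitz on J_z with constant L and satisfies ∫ g d𝔪 = 0, and every sequence (T_i)_{i≥1} ⊂ 𝓜 with transfer operators ℒ_i, one has ‖ℒ_k ⋯ ℒ_1 g‖_{L¹(𝔪)} ≤ C ϑ^k for all k ≥ 0. -/
open MeasureTheory Filter Topology Set UniformConvergence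

noncomputable section

instance : Fact ((0:ℝ) < 1) := ⟨zero_lt_one⟩

/-- The circle `𝕊 = ℝ/ℤ`. -/
abbrev Circle1 : Type := AddCircle (1 : ℝ)

/-- A `C²` expanding circle map with expansion `≥ lam` and `‖T''‖_∞ ≤ Astar`,
encoded by a lift `F : ℝ → ℝ` satisfying `F (x+1) = F x + deg`. -/
structure CM (lam Astar : ℝ) where
  F : ℝ → ℝ
  deg : ℤ
  lift_add_one : ∀ x : ℝ, F (x + 1) = F x + deg
  contDiff : ContDiff ℝ 2 F
  expanding : ∀ x : ℝ, lam ≤ deriv F x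
  second_bound : ∀ x : ℝ, |deriv (deriv F) x| ≤ Astar

namespace CM

variable {lam Astar : ℝ}

/-- The induced map on the circle. -/
def toMap (T : CM lam Astar) : Circle1 → Circle1 :=
  fun x => (↑(T.F ((AddCircle.equivIco 1 0 x : ℝ))) : Circle1)

/-- The derivative of `T`, as a function on the circle. -/
def dmap (T : CM lam Astar) : Circle1 → ℝ :=
  fun x => deriv T.F ((AddCircle.equivIco 1 0 x : ℝ))

end CM

/-- The `C¹` distance on the space of maps. -/
def dC1 {lam Astar : ℝ} (T₁ T₂ : CM lam Astar) : ℝ :=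
  (⨆ x : Circle1, dist (T₁.toMap x) (T₂.toMap x)) + (⨆ x : Circle1, |T₁.dmap x - T₂.dmap x|)

/-- The transfer operator `ℒ_T h (x) = ∑_{T y = x} h y / T' y`. -/
def transfer {lam Astar : ℝ} (T : CM lam Astar) (h : Circle1 → ℝ) : Circle1 → ℝ :=
  fun x => ∑' y : {y : Circle1 // T.toMap y = x}, h y / T.dmap y

/-- Iterated transfer operators `ℒ_k ⋯ ℒ_1` of the sequence `T_1, T_2, …` (`Ts i = T_i`). -/
def transferIter {lam Astar : ℝ} (Ts : ℕ → CM lam Astar) : ℕ → (Circle1 → ℝ) → (Circle1 → ℝ)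
  | 0, h => h
  | (k+1), h => transfer (Ts (k+1)) (transferIter Ts k h)

/-- Composition `T_k ∘ ⋯ ∘ T_1` as circle maps. -/
def mapIter {lam Astar : ℝ} (Ts : ℕ → CM lam Astar) : ℕ → Circle1 → Circle1
  | 0 => id
  | (k+1) => (Ts (k+1)).toMap ∘ mapIter Ts k

/-- Composition of the lifts `F_k ∘ ⋯ ∘ F_1`. -/
def liftIter {lam Astar : ℝ} (Ts : ℕ → CM lam Astar) : ℕ → ℝ → ℝ
  | 0 => id
  | (k+1) => (Ts (k+1)).F ∘ liftIter Ts k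

/-- A real representative of `z`. -/
def zrep (z : Circle1) : ℝ := (AddCircle.equivIco 1 0 z : ℝ)

/-- The coordinate on the cut circle `J_z = 𝕊 ∖ {z}`. -/
def arcCoord (z x : Circle1) : ℝ := ((AddCircle.equivIoc 1 (zrep z) x : ℝ))

/-- `|x − y|_z`: the length of the subarc of `J_z` connecting `x` and `y`. -/
def arcDist (z x y : Circle1) : ℝ := |arcCoord z x - arcCoord z y|

/-- `g` is Lipschitz on `J_z = 𝕊 ∖ {z}` with constant `L`. -/
def LipOnArc (z : Circle1) (L : ℝ) (g : Circle1 → ℝ) : Prop :=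
  ∀ x y : Circle1, x ≠ z → y ≠ z → |g x - g y| ≤ L * arcDist z x y

/-- A probability density w.r.t. the Haar–Lebesgue measure `𝔪` on the circle. -/
def IsProbDensity (ψ : Circle1 → ℝ) : Prop :=
  Integrable ψ volume ∧ (∫ x : Circle1, ψ x) = 1 ∧ ∀ x, 0 ≤ ψ x

/-- The class `𝒟_L`: positive probability densities whose logarithm is Lipschitz
with constant `L` on `J_z` for some `z`. -/
def memD (L : ℝ) (ψ : Circle1 → ℝ) : Prop :=
  IsProbDensity ψ ∧ (∀ x, 0 < ψ x) ∧ ∃ z : Circle1, LipOnArc z L (fun x => Real.log (ψ x))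

/-- The `L¹(𝔪)` norm. -/
def l1norm (h : Circle1 → ℝ) : ℝ := ∫ x : Circle1, |h x|

/-- The supremum norm. -/
def supNorm (h : Circle1 → ℝ) : ℝ := ⨆ x : Circle1, |h x|

/-- The Lipschitz constant of `h` (w.r.t. the metric of the circle). -/
def lipConst (h : Circle1 → ℝ) : ℝ :=
  sInf {L : ℝ | 0 ≤ L ∧ ∀ x y : Circle1, |h x - h y| ≤ L * dist x y}

/-- The Lipschitz norm `‖h‖_Lip = Lip(h) + ‖h‖_∞`. -/
def lipNorm (h : Circle1 → ℝ) : ℝ := lipConst h + supNorm h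

/-- `ρ` is the density of the SRB measure of `T`: the density of a `T`-invariant
probability measure equivalent to `𝔪`. -/
def IsSRBDensity {lam Astar : ℝ} (T : CM lam Astar) (ρ : Circle1 → ℝ) : Prop :=
  IsProbDensity ρ ∧ (∀ᵐ x : Circle1, 0 < ρ x) ∧
    Measure.map T.toMap (volume.withDensity (fun x => ENNReal.ofReal (ρ x))) =
      volume.withDensity (fun x => ENNReal.ofReal (ρ x))

section QDS

variable {lam Astar : ℝ}

/-- `x_{n,k} = T_{n,k} ∘ ⋯ ∘ T_{n,1}` for a triangular array. -/
def arrIter (Tarr : ℕ → ℕ → CM lam Astar) (n : ℕ) : ℕ → Circle1 → Circle1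
  | 0 => id
  | (k+1) => (Tarr n (k+1)).toMap ∘ arrIter Tarr n k

/-- `ℒ_{n,k} ⋯ ℒ_{n,1}` for a triangular array. -/
def arrTransfer (Tarr : ℕ → ℕ → CM lam Astar) (n : ℕ) : ℕ → (Circle1 → ℝ) → (Circle1 → ℝ)
  | 0, h => h
  | (k+1), h => transfer (Tarr n (k+1)) (arrTransfer Tarr n k h)

/-- `f_{n,k} = f ∘ T_{n,k} ∘ ⋯ ∘ T_{n,1}` evaluated at `x`. -/
def fnk (Tarr : ℕ → ℕ → CM lam Astar) (f : Circle1 → ℝ) (n k : ℕ) (x : Circle1) : ℝ :=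
  f (arrIter Tarr n k x)

/-- `ζₙ(x,t) = n⁻¹ (∑_{k<⌊nt⌋} f_{n,k}(x) + {nt}·f_{n,⌊nt⌋}(x))`. -/
def zetaP (Tarr : ℕ → ℕ → CM lam Astar) (f : Circle1 → ℝ) (n : ℕ) (x : Circle1) (t : ℝ) : ℝ :=
  (n : ℝ)⁻¹ * ((∑ k ∈ Finset.range ⌊(n : ℝ) * t⌋₊, fnk Tarr f n k x) +
    Int.fract ((n : ℝ) * t) * fnk Tarr f n ⌊(n : ℝ) * t⌋₊ x)

/-- `ξₙ(x,t) = √n ζₙ(x,t) − √n μ(ζₙ(·,t))` for a measure `μ`. -/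
def xiP (Tarr : ℕ → ℕ → CM lam Astar) (f : Circle1 → ℝ) (μ : Measure Circle1) (n : ℕ)
    (x : Circle1) (t : ℝ) : ℝ :=
  Real.sqrt n * zetaP Tarr f n x t - Real.sqrt n * ∫ y, zetaP Tarr f n y t ∂μ

/-- The Hölder continuity (exponent `η`) of the curve `γ` on `[0,1]`, w.r.t. `d_{C¹}`. -/
def HolderCurve (η : ℝ) (γ : ℝ → CM lam Astar) : Prop :=
  ∃ H : ℝ, ∀ s ∈ Icc (0:ℝ) 1, ∀ t ∈ Icc (0:ℝ) 1, dC1 (γ s) (γ t) ≤ H * |s - t| ^ η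

/-- The convergence-rate condition `sup_n n^η sup_t d_{C¹}(T_{n,⌊nt⌋}, γ_t) < ∞`. -/
def ArrayApprox (η : ℝ) (γ : ℝ → CM lam Astar) (Tarr : ℕ → ℕ → CM lam Astar) : Prop :=
  ∃ M : ℝ, ∀ n : ℕ, 1 ≤ n → ∀ t ∈ Icc (0:ℝ) 1,
    (n : ℝ) ^ η * dC1 (Tarr n ⌊(n : ℝ) * t⌋₊) (γ t) ≤ M

end QDS

/-- The path space: functions `[0,1] → ℝ` with the topology of uniform convergence;
continuous paths (with the supremum metric) embed isometrically. -/
abbrev PathSpace : Type := (Icc (0:ℝ) 1) →ᵤ ℝ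

instance : MeasurableSpace PathSpace := borel PathSpace

/-- A function `[0,1] → ℝ` (given as a function on `ℝ`) as a point of the path space. -/
def pathOf (g : ℝ → ℝ) : PathSpace := UniformFun.ofFun (fun t => g t)

/-- Evaluation of a path at time `t` (clamped to `[0,1]`). -/
def evalPath (t : ℝ) (ω : PathSpace) : ℝ := UniformFun.toFun ω (projIcc 0 1 zero_le_one t)


section Extra

variable {lam Astar : ℝ}

/-- `μ(ζₙ(·,t))` for the measure with density `ρ` w.r.t. `𝔪`. -/
def zetaMean (Tarr : ℕ → ℕ → CM lam Astar) (f : Circle1 → ℝ) (ρ : Circle1 → ℝ)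
    (n : ℕ) (t : ℝ) : ℝ :=
  ∫ y : Circle1, zetaP Tarr f n y t * ρ y

/-- `𝔪(ζₙ(·,t))`, the mean w.r.t. the Lebesgue measure. -/
def zetaMeanM (Tarr : ℕ → ℕ → CM lam Astar) (f : Circle1 → ℝ) (n : ℕ) (t : ℝ) : ℝ :=
  ∫ y : Circle1, zetaP Tarr f n y t

/-- `ξₙ(x,t) = √n ζₙ(x,t) − √n μ(ζₙ(·,t))`, where `μ` has density `ρ`. -/
def xiD (Tarr : ℕ → ℕ → CM lam Astar) (f : Circle1 → ℝ) (ρ : Circle1 → ℝ)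
    (n : ℕ) (x : Circle1) (t : ℝ) : ℝ :=
  Real.sqrt n * zetaP Tarr f n x t - Real.sqrt n * zetaMean Tarr f ρ n t

end Extra

/-- The σ-algebra `𝔉_t` on the path space, generated by the evaluations at times `s ∈ [0,t]`. -/
def pathFiltration (t : ℝ) : MeasurableSpace PathSpace :=
  ⨆ (s : ℝ) (_ : 0 ≤ s ∧ s ≤ t), MeasurableSpace.comap (evalPath s) (borel ℝ)

/-- The process `M_t(ω) = A(ω(t)) − A(ω(0)) − ½∫₀ᵗ σ̂ₛ²·A''(ω(s)) ds`. -/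
def MGproc (σ2 : ℝ → ℝ) (A : ℝ → ℝ) (t : ℝ) (ω : PathSpace) : ℝ :=
  A (evalPath t ω) - A (evalPath 0 ω) -
    (1/2) * ∫ s in (0:ℝ)..t, σ2 s * deriv (deriv A) (evalPath s ω)

/-- `P` solves the martingale problem on `C⁰([0,1],ℝ)` for the generator `½σ̂ₜ² d²/dx²`,
started at `0`:  `P` is a probability measure, concentrated on continuous paths starting at `0`,
and for every `A ∈ C_c^∞(ℝ)` the process `MGproc σ2 A` is a `P`-martingale w.r.t. the
natural filtration `𝔉_t`.  -/
def SolvesMartingaleProblem (σ2 : ℝ → ℝ) (P : Measure PathSpace) : Prop :=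
  IsProbabilityMeasure P ∧
  P {ω : PathSpace | evalPath 0 ω = 0} = 1 ∧
  P {ω : PathSpace | Continuous (UniformFun.toFun ω)} = 1 ∧
  ∀ A : ℝ → ℝ, ContDiff ℝ (⊤ : ℕ∞) A → HasCompactSupport A →
    (∀ t ∈ Icc (0:ℝ) 1, Integrable (MGproc σ2 A t) P) ∧
    (∀ t ∈ Icc (0:ℝ) 1, @Measurable PathSpace ℝ (pathFiltration t) _ (MGproc σ2 A t)) ∧
    (∀ s ∈ Icc (0:ℝ) 1, ∀ t ∈ Icc (0:ℝ) 1, s ≤ t →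
      P[MGproc σ2 A t | pathFiltration s] =ᵐ[P] MGproc σ2 A s)

end

namespace MB

open scoped Interval

variable {lam Astar : ℝ}

lemma lift_add_int (T : CM lam Astar) (x : ℝ) (n : ℤ) : T.F (x + n) = T.F x + n * T.deg := by
  induction n using Int.induction_on with
  | zero => simp
  | succ i ih =>
    have := T.lift_add_one (x + (i : ℤ))
    push_cast at *
    rw [← add_assoc, this, ih]; ring
  | pred i ih =>
    have := T.lift_add_one (x + ((-(i:ℤ) - 1 : ℤ) : ℝ))
    push_cast at *
    have e : x + (-(i:ℝ) - 1) + 1 = x + -(i:ℝ) := by ring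
    rw [e, ih] at this
    linarith

lemma F_diff (T : CM lam Astar) : Differentiable ℝ T.F :=
  T.contDiff.differentiable (by norm_num)

lemma dF_diff (T : CM lam Astar) : Differentiable ℝ (deriv T.F) := by
  have h : ContDiff ℝ (1 + 1) T.F := by
    have := T.contDiff
    norm_num
    exact this
  exact (contDiff_succ_iff_deriv.1 h).2.2.differentiable (by norm_num)

lemma F_expand (T : CM lam Astar) {x y : ℝ} (h : x ≤ y) : lam * (y - x) ≤ T.F y - T.F x := by
  exact mul_sub_le_image_sub_of_le_deriv (F_diff T) T.expanding h

lemma F_mono (hlam : 1 < lam) (T : CM lam Astar) : StrictMono T.F := by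
  intro x y h
  have := F_expand T h.le
  nlinarith

lemma deg_gt (hlam : 1 < lam) (T : CM lam Astar) : (1:ℝ) < T.deg := by
  have h1 := F_expand T (zero_le_one (α := ℝ))
  have h2 := T.lift_add_one 0
  rw [zero_add] at h2
  rw [h2] at h1
  linarith

lemma F_surj (hlam : 1 < lam) (T : CM lam Astar) : Function.Surjective T.F := by
  refine (F_diff T).continuous.surjective ?_ ?_
  · refine tendsto_atTop_mono' _ (f₁ := fun x => T.F 0 + x) ?_
      (tendsto_atTop_add_const_left _ _ tendsto_id)
    filter_upwards [eventually_ge_atTop 0] with x hx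
    have := F_expand T hx
    nlinarith
  · have h1 : Tendsto (fun x => T.F 0 + x) atBot atBot :=
      tendsto_atBot_add_const_left _ _ tendsto_id
    refine tendsto_atBot_mono' _ ?_ h1
    filter_upwards [eventually_le_atBot 0] with x hx
    have := F_expand T hx
    nlinarith

lemma exists_inv (hlam : 1 < lam) (T : CM lam Astar) :
    ∃ G : ℝ → ℝ, (∀ s, T.F (G s) = s) ∧ (∀ u, G (T.F u) = u) := by
  obtain ⟨G, hG⟩ := (F_surj hlam T).hasRightInverse
  exact ⟨G, hG, fun u => (F_mono hlam T).injective (hG _)⟩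

lemma coe_eq_iff (s t : ℝ) : (s : Circle1) = t ↔ ∃ n : ℤ, s = t + n := by
  rw [← sub_eq_zero, ← AddCircle.coe_sub, AddCircle.coe_eq_zero_iff]
  constructor
  · rintro ⟨n, hn⟩
    exact ⟨n, by simp at hn; linarith⟩
  · rintro ⟨n, hn⟩
    exact ⟨n, by simp; linarith⟩

lemma rep_coe (u : ℝ) : ∃ n : ℤ, (AddCircle.equivIco 1 0 (u : Circle1) : ℝ) = u + n :=
  (coe_eq_iff _ _).1 AddCircle.coe_equivIco

lemma toMap_coe (T : CM lam Astar) (u : ℝ) : T.toMap (u : Circle1) = (T.F u : Circle1) := by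
  obtain ⟨n, hn⟩ := rep_coe u
  unfold CM.toMap
  rw [hn, lift_add_int, coe_eq_iff]
  exact ⟨n * T.deg, by push_cast; ring⟩

lemma deriv_add_int (T : CM lam Astar) (u : ℝ) (n : ℤ) : deriv T.F (u + n) = deriv T.F u := by
  rw [← deriv_comp_add_const]
  have : (fun x => T.F (x + n)) = fun x => T.F x + n * T.deg := funext fun x => lift_add_int T x n
  rw [this, deriv_add_const]

lemma dmap_coe (T : CM lam Astar) (u : ℝ) : T.dmap (u : Circle1) = deriv T.F u := by
  obtain ⟨n, hn⟩ := rep_coe u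
  unfold CM.dmap
  rw [hn, deriv_add_int]

lemma transfer_coe (hlam : 1 < lam) (T : CM lam Astar) {G : ℝ → ℝ} (hG : ∀ s, T.F (G s) = s)
    (hG' : ∀ u, G (T.F u) = u) (h : Circle1 → ℝ) (t : ℝ) :
    transfer T h (t : Circle1) =
      ∑ j ∈ Finset.range T.deg.toNat, h (G (t + j) : ℝ) / deriv T.F (G (t + j)) := by
  have hd : (1:ℤ) < T.deg := by exact_mod_cast deg_gt hlam T
  have hmem : ∀ j : ℕ, T.toMap (G (t + j) : ℝ) = (t : Circle1) := by
    intro j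
    rw [toMap_coe, hG, coe_eq_iff]
    exact ⟨j, by simp⟩
  let e : Fin T.deg.toNat → {y : Circle1 // T.toMap y = (t : Circle1)} :=
    fun j => ⟨(G (t + (j : ℕ)) : ℝ), hmem j⟩
  have he : Function.Bijective e := by
    constructor
    · intro i j hij
      have := congrArg Subtype.val hij
      simp only [e] at this
      obtain ⟨n, hn⟩ := (coe_eq_iff _ _).1 this
      have h2 := congrArg T.F hn
      rw [lift_add_int, hG, hG] at h2
      have h3 : ((i:ℕ):ℤ) = (j:ℕ) + n * T.deg := by
        have : (((i:ℕ):ℤ):ℝ) = (((j:ℕ) + n * T.deg : ℤ) : ℝ) := by push_cast; linarith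
        exact_mod_cast this
      have hi := i.2
      have hj := j.2
      have hn0 : n = 0 := by
        rcases lt_trichotomy n 0 with h0 | h0 | h0
        · nlinarith [show n ≤ -1 by omega, show ((i:ℕ):ℤ) ≥ 0 by omega, show ((j:ℕ):ℤ) < T.deg by omega]
        · exact h0
        · nlinarith [show n ≥ 1 by omega, show ((j:ℕ):ℤ) ≥ 0 by omega, show ((i:ℕ):ℤ) < T.deg by omega]
      apply Fin.ext
      rw [hn0] at h3
      omega
    · rintro ⟨y, hy⟩
      obtain ⟨u, rfl⟩ := QuotientAddGroup.mk_surjective y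
      have hy' := hy
      change T.toMap (u : Circle1) = _ at hy'
      rw [toMap_coe, coe_eq_iff] at hy'
      obtain ⟨m, hm⟩ := hy'
      have h1 := Int.emod_nonneg m (show T.deg ≠ 0 by omega)
      have h2 := Int.emod_lt_of_pos m (show 0 < T.deg by omega)
      have h3 := Int.emod_add_mul_ediv m T.deg
      refine ⟨⟨(m % T.deg).toNat, by omega⟩, ?_⟩
      apply Subtype.ext
      simp only [e]
      change _ = (u : Circle1)
      rw [coe_eq_iff]
      refine ⟨-(m / T.deg), ?_⟩
      rw [← hG' (u + _)]
      congr 1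
      rw [lift_add_int, hm]
      have h4 : (((m % T.deg).toNat : ℤ) : ℝ) = ((m % T.deg : ℤ) : ℝ) := by
        rw [Int.toNat_of_nonneg h1]
      have h5 : ((m % T.deg : ℤ) : ℝ) + T.deg * ((m / T.deg : ℤ) : ℝ) = m := by exact_mod_cast h3
      push_cast at h4 ⊢
      linarith
  unfold transfer
  rw [← (Equiv.ofBijective e he).tsum_eq, tsum_fintype, Finset.sum_range]
  refine Finset.sum_congr rfl fun j _ => ?_
  simp only [Equiv.ofBijective_apply, e]
  rw [dmap_coe]

lemma transfer_sub (hlam : 1 < lam) (T : CM lam Astar) (h₁ h₂ : Circle1 → ℝ) :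
    transfer T (fun x => h₁ x - h₂ x) = fun x => transfer T h₁ x - transfer T h₂ x := by
  obtain ⟨G, hG, hG'⟩ := exists_inv hlam T
  funext x
  obtain ⟨t, rfl⟩ := QuotientAddGroup.mk_surjective x
  simp only [transfer_coe hlam T hG hG', sub_div, Finset.sum_sub_distrib]

lemma transferIter_sub (hlam : 1 < lam) (Ts : ℕ → CM lam Astar) (k : ℕ) (h₁ h₂ : Circle1 → ℝ) :
    transferIter Ts k (fun x => h₁ x - h₂ x) =
      fun x => transferIter Ts k h₁ x - transferIter Ts k h₂ x := by
  induction k with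
  | zero => rfl
  | succ k ih => simp only [transferIter]; rw [ih, transfer_sub hlam]

lemma transferIter_add (Ts : ℕ → CM lam Astar) (N k : ℕ) (h : Circle1 → ℝ) :
    transferIter Ts (N + k) h = transferIter (fun i => Ts (N + i)) k (transferIter Ts N h) := by
  induction k with
  | zero => rfl
  | succ k ih =>
    change transfer (Ts (N + k + 1)) (transferIter Ts (N + k) h) = _
    rw [ih]; rfl

/-- Lifted cone condition. -/
def PL (K a : ℝ) (h : Circle1 → ℝ) : Prop :=
  ∀ s ∈ Ioo a (a + 1), ∀ t ∈ Ioo a (a + 1),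
    0 ≤ h (s : ℝ) ∧ h (s : ℝ) ≤ Real.exp (K * |s - t|) * h (t : ℝ)

lemma PL.mono {K K' a : ℝ} {h : Circle1 → ℝ} (hK : K ≤ K') (H : PL K a h) : PL K' a h := by
  intro s hs t ht
  refine ⟨(H s hs t ht).1, (H s hs t ht).2.trans ?_⟩
  have := (H t ht t ht).1
  gcongr

lemma PL.transfer (hlam : 1 < lam) (hA : 0 < Astar) (T : CM lam Astar) {K a : ℝ} (hK : 0 ≤ K)
    {h : Circle1 → ℝ} (H : PL K a h) :
    PL ((K + Astar / lam) / lam) (T.F a) (transfer T h) := by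
  obtain ⟨G, hG, hG'⟩ := exists_inv hlam T
  have hl0 : 0 < lam := by linarith
  have hd : (1:ℤ) < T.deg := by exact_mod_cast deg_gt hlam T
  have hFa := T.lift_add_one a
  have hmono := F_mono hlam T
  have key : ∀ s ∈ Ioo (T.F a) (T.F a + 1), ∀ j ∈ Finset.range T.deg.toNat,
      G (s + j) ∈ Ioo a (a + 1) := by
    intro s hs j hj
    have hj' : (j:ℤ) + 1 ≤ T.deg := by have := Finset.mem_range.1 hj; omega
    have hj2 : (j:ℝ) + 1 ≤ T.deg := by exact_mod_cast hj'
    have hj0 : (0:ℝ) ≤ j := Nat.cast_nonneg j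
    constructor
    · rw [← hmono.lt_iff_lt, hG]; linarith [hs.1]
    · rw [← hmono.lt_iff_lt, hG, hFa]; linarith [hs.2]
  have hpos : ∀ u, 0 < deriv T.F u := fun u => hl0.trans_le (T.expanding u)
  intro s hs t ht
  rw [transfer_coe hlam T hG hG', transfer_coe hlam T hG hG']
  constructor
  · exact Finset.sum_nonneg fun j hj =>
      div_nonneg (H _ (key s hs j hj) _ (key s hs j hj)).1 (hpos _).le
  rw [Finset.mul_sum]
  refine Finset.sum_le_sum fun j hj => ?_
  set x := G (s + j) with hx
  set y := G (t + j) with hy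
  have hxm := key s hs j hj
  have hym := key t ht j hj
  have hxy : |x - y| ≤ |s - t| / lam := by
    rw [le_div_iff₀ hl0]
    have hs' : T.F x = s + j := hG _
    have ht' : T.F y = t + j := hG _
    rcases le_total x y with h0 | h0
    · have := F_expand T h0
      rw [abs_of_nonpos (by linarith), abs_of_nonpos (by nlinarith)]
      linarith
    · have := F_expand T h0
      rw [abs_of_nonneg (by linarith), abs_of_nonneg (by nlinarith)]
      linarith
  have hder : deriv T.F y ≤ Real.exp (Astar / lam * |x - y|) * deriv T.F x := by
    have h1 : |deriv T.F y - deriv T.F x| ≤ Astar * |y - x| := by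
      have := Convex.norm_image_sub_le_of_norm_deriv_le (f := deriv T.F) (s := univ) (C := Astar)
        (x := x) (y := y) (fun u _ => dF_diff T u) (fun u _ => T.second_bound u) convex_univ
        (mem_univ _) (mem_univ _)
      simpa [Real.norm_eq_abs] using this
    have h2 : deriv T.F y ≤ deriv T.F x + Astar * |x - y| := by
      rw [abs_sub_comm x y]; linarith [le_abs_self (deriv T.F y - deriv T.F x)]
    have h3 := Real.add_one_le_exp (Astar / lam * |x - y|)
    have h4 : Astar * |x - y| ≤ Astar / lam * |x - y| * deriv T.F x := by
      have : Astar * |x - y| = Astar / lam * |x - y| * lam := by field_simp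
      rw [this]
      exact mul_le_mul_of_nonneg_left (T.expanding x) (by positivity)
    nlinarith [hpos x]
  have hh := (H x hxm y hym).2
  have hy0 := (H y hym y hym).1
  have hexp : Real.exp (K * |x - y|) * Real.exp (Astar / lam * |x - y|) ≤
      Real.exp ((K + Astar / lam) / lam * |s - t|) := by
    rw [← Real.exp_add]
    apply Real.exp_le_exp.2
    have : (K + Astar / lam) * |x - y| ≤ (K + Astar / lam) * (|s - t| / lam) :=
      mul_le_mul_of_nonneg_left hxy (by positivity)
    calc _ = (K + Astar / lam) * |x - y| := by ring
      _ ≤ _ := this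
      _ = _ := by ring
  rw [← mul_div_assoc, div_le_div_iff₀ (hpos x) (hpos y)]
  calc h ↑x * deriv T.F y ≤ (Real.exp (K * |x - y|) * h ↑y) *
        (Real.exp (Astar / lam * |x - y|) * deriv T.F x) := by
        refine mul_le_mul hh hder (hpos _).le (by positivity)
    _ = (Real.exp (K * |x - y|) * Real.exp (Astar / lam * |x - y|)) * (h ↑y * deriv T.F x) := by
        ring
    _ ≤ Real.exp ((K + Astar / lam) / lam * |s - t|) * (h ↑y * deriv T.F x) :=
        mul_le_mul_of_nonneg_right hexp (mul_nonneg hy0 (hpos x).le)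
    _ = _ := by ring

lemma integrable_of_lift {a : ℝ} {h : Circle1 → ℝ}
    (H : IntegrableOn (fun t : ℝ => h (t : Circle1)) (Ioc a (a + 1))) : Integrable h := by
  have mp := (measurePreserving_subtype_coe (μa := (volume : Measure ℝ))
    (measurableSet_Ioc (a := a) (b := a + 1))).comp (AddCircle.measurePreserving_equivIoc 1 (a := a))
  have := mp.integrable_comp_of_integrable H
  refine this.congr (Eventually.of_forall fun x => ?_)
  simp [Function.comp]

lemma lift_of_integrable (a b : ℝ) {h : Circle1 → ℝ} (H : Integrable h) :
    IntervalIntegrable (fun t : ℝ => h (t : Circle1)) volume a b := by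
  have hp : Function.Periodic (fun t : ℝ => h (t : Circle1)) 1 := by
    intro t
    simp
  refine hp.intervalIntegrable one_ne_zero (t := 0) ?_ a b
  rw [intervalIntegrable_iff_integrableOn_Ioc_of_le (by norm_num)]
  exact (AddCircle.measurePreserving_mk 1 0).integrable_comp_of_integrable H

lemma integral_eq (a : ℝ) (h : Circle1 → ℝ) :
    ∫ x : Circle1, h x = ∫ t in Ioo a (a + 1), h (t : ℝ) := by
  rw [← AddCircle.integral_preimage 1 a, integral_Ioc_eq_integral_Ioo]

lemma integral_const_circle (c : ℝ) : ∫ _ : Circle1, c = c := by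
  rw [integral_eq 0]; simp

lemma PL.integrable {K a : ℝ} (hK : 0 ≤ K) {h : Circle1 → ℝ} (H : PL K a h) : Integrable h := by
  apply integrable_of_lift (a := a)
  rw [integrableOn_Ioc_iff_integrableOn_Ioo]
  have hc : ContinuousOn (fun t : ℝ => h (t : Circle1)) (Ioo a (a + 1)) := by
    intro t ht
    have h1 : Tendsto (fun s : ℝ => Real.exp (K * |s - t|) * h (t : ℝ)) (𝓝[Ioo a (a + 1)] t)
        (𝓝 (h (t : ℝ))) := by
      have : Continuous (fun s : ℝ => Real.exp (K * |s - t|) * h (t : ℝ)) := by fun_prop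
      have := this.tendsto t
      simp only [sub_self, abs_zero, mul_zero, Real.exp_zero, one_mul] at this
      exact this.mono_left nhdsWithin_le_nhds
    have h2 : Tendsto (fun s : ℝ => Real.exp (-(K * |s - t|)) * h (t : ℝ)) (𝓝[Ioo a (a + 1)] t)
        (𝓝 (h (t : ℝ))) := by
      have : Continuous (fun s : ℝ => Real.exp (-(K * |s - t|)) * h (t : ℝ)) := by fun_prop
      have := this.tendsto t
      simp only [sub_self, abs_zero, mul_zero, neg_zero, Real.exp_zero, one_mul] at this
      exact this.mono_left nhdsWithin_le_nhds
    refine tendsto_of_tendsto_of_tendsto_of_le_of_le' h2 h1 ?_ ?_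
    · filter_upwards [self_mem_nhdsWithin] with s hs
      have := (H t ht s hs).2
      rw [abs_sub_comm] at this
      rw [Real.exp_neg, inv_mul_le_iff₀ (Real.exp_pos _)]
      exact this
    · filter_upwards [self_mem_nhdsWithin] with s hs
      exact (H s hs t ht).2
  have hm : a + 1 / 2 ∈ Ioo a (a + 1) := by constructor <;> linarith
  refine IntegrableOn.of_bound (by simp) (hc.aestronglyMeasurable measurableSet_Ioo)
    (Real.exp K * h ((a + 1 / 2 : ℝ))) ?_
  rw [ae_restrict_iff' measurableSet_Ioo]
  refine Eventually.of_forall fun s hs => ?_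
  have := H s hs _ hm
  rw [Real.norm_eq_abs, abs_of_nonneg this.1]
  refine this.2.trans ?_
  have h0 := (H _ hm _ hm).1
  have : K * |s - (a + 1/2)| ≤ K := by
    have : |s - (a + 1/2)| ≤ 1 := by rw [abs_le]; constructor <;> linarith [hs.1, hs.2]
    nlinarith
  gcongr

lemma PL.lower {K a : ℝ} (hK : 0 ≤ K) {h : Circle1 → ℝ} (H : PL K a h) {s : ℝ}
    (hs : s ∈ Ioo a (a + 1)) : ∫ x : Circle1, h x ≤ Real.exp K * h (s : ℝ) := by
  rw [integral_eq a]
  have hi : IntegrableOn (fun t : ℝ => h (t : Circle1)) (Ioo a (a + 1)) := by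
    have := (lift_of_integrable a (a + 1) (H.integrable hK)).1
    exact this.mono_set Ioo_subset_Ioc_self
  calc _ ≤ ∫ t in Ioo a (a + 1), Real.exp K * h (s : ℝ) := by
        refine setIntegral_mono_on hi (integrableOn_const (by simp)) measurableSet_Ioo ?_
        intro t ht
        refine (H t ht s hs).2.trans ?_
        have h0 := (H s hs s hs).1
        have : K * |t - s| ≤ K := by
          have : |t - s| ≤ 1 := by
            rw [abs_le]; constructor <;> linarith [hs.1, hs.2, ht.1, ht.2]
          nlinarith
        gcongr
    _ = _ := by simp

lemma integral_transfer (hlam : 1 < lam) (T : CM lam Astar) {h : Circle1 → ℝ}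
    (H : Integrable h) : ∫ x : Circle1, transfer T h x = ∫ x : Circle1, h x := by
  obtain ⟨G, hG, hG'⟩ := exists_inv hlam T
  have hl0 : 0 < lam := by linarith
  have hd : (1:ℤ) < T.deg := by exact_mod_cast deg_gt hlam T
  have hdn : ((T.deg.toNat : ℕ) : ℝ) = T.deg := by
    have : ((T.deg.toNat : ℕ) : ℤ) = T.deg := Int.toNat_of_nonneg (by omega)
    exact_mod_cast this
  have hmono := F_mono hlam T
  have hpos : ∀ u, 0 < deriv T.F u := fun u => hl0.trans_le (T.expanding u)
  set b := T.F 0 with hb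
  have hFb : T.F 1 = b + T.deg := by have := T.lift_add_one 0; rwa [zero_add] at this
  set φ : ℝ → ℝ := fun s => h (G s : ℝ) / deriv T.F (G s) with hφ
  have himg : T.F '' (Ioc 0 1) = Ioc b (b + T.deg) := by
    ext s
    constructor
    · rintro ⟨u, hu, rfl⟩
      exact ⟨hmono hu.1, hFb ▸ hmono.monotone hu.2⟩
    · intro hs
      refine ⟨G s, ⟨?_, ?_⟩, hG s⟩
      · rw [← hmono.lt_iff_lt, hG]; exact hs.1
      · rw [← hmono.le_iff_le, hG, hFb]; exact hs.2
  have hfun : (fun x => |deriv T.F x| • φ (T.F x)) = fun x : ℝ => h (x : Circle1) := by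
    funext x
    simp only [hφ, hG', smul_eq_mul, abs_of_pos (hpos x)]
    have := (hpos x).ne'
    field_simp
  have hder : ∀ x ∈ Ioc (0:ℝ) 1, HasDerivWithinAt T.F (deriv T.F x) (Ioc 0 1) x :=
    fun x _ => ((F_diff T) x).hasDerivAt.hasDerivWithinAt
  have hint : IntegrableOn φ (Ioc b (b + T.deg)) := by
    rw [← himg, integrableOn_image_iff_integrableOn_abs_deriv_smul measurableSet_Ioc hder
      hmono.injective.injOn, hfun]
    exact (lift_of_integrable 0 1 H).1
  have hcv : ∫ s in Ioc b (b + T.deg), φ s = ∫ x : Circle1, h x := by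
    rw [← himg, integral_image_eq_integral_abs_deriv_smul measurableSet_Ioc hder
      hmono.injective.injOn, hfun, ← AddCircle.integral_preimage 1 0, zero_add]
  have hpiece : ∀ j < T.deg.toNat, IntervalIntegrable φ volume (b + (j : ℕ)) (b + ((j + 1 : ℕ) : ℝ)) := by
    intro j hj
    rw [intervalIntegrable_iff_integrableOn_Ioc_of_le (by push_cast; linarith)]
    refine hint.mono_set (Ioc_subset_Ioc (by simp) ?_)
    rw [← hdn]
    have : ((j + 1 : ℕ) : ℝ) ≤ (T.deg.toNat : ℕ) := by exact_mod_cast hj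
    linarith
  have hsum := intervalIntegral.sum_integral_adjacent_intervals (f := φ) (μ := volume)
    (a := fun j : ℕ => b + (j : ℝ)) (n := T.deg.toNat) hpiece
  rw [← hcv, ← AddCircle.intervalIntegral_preimage 1 b]
  simp only [transfer_coe hlam T hG hG']
  rw [intervalIntegral.integral_finsetSum]
  · have e1 : ∀ j : ℕ, ∫ t in b..b + 1, h (G (t + j) : ℝ) / deriv T.F (G (t + j)) =
        ∫ s in (b + (j : ℝ))..(b + ((j + 1 : ℕ) : ℝ)), φ s := by
      intro j
      rw [intervalIntegral.integral_comp_add_right (fun s => φ s)]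
      congr 1
      push_cast; ring
    simp only [e1]
    rw [hsum, intervalIntegral.integral_of_le (by simp)]
    simp [hdn]
  · intro j hj
    have := (hpiece j (Finset.mem_range.1 hj)).comp_add_right (j : ℝ)
    convert this using 1
    · ring
    · push_cast; ring

/-- base constant -/
noncomputable def Kinf (lam Astar : ℝ) : ℝ := Astar / lam / (lam - 1)

lemma Kinf_nonneg (hlam : 1 < lam) (hA : 0 < Astar) : 0 ≤ Kinf lam Astar := by
  have : 0 < lam - 1 := by linarith
  have : 0 < lam := by linarith
  unfold Kinf; positivity

lemma PL.iter (hlam : 1 < lam) (hA : 0 < Astar) (Ts : ℕ → CM lam Astar) {r a : ℝ} (hr : 0 ≤ r)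
    {h : Circle1 → ℝ} (H : PL (Kinf lam Astar + r) a h) (k : ℕ) :
    ∃ b, PL (Kinf lam Astar + r / lam ^ k) b (transferIter Ts k h) := by
  have hl0 : 0 < lam := by linarith
  have hl1 : 0 < lam - 1 := by linarith
  have hKi := Kinf_nonneg hlam hA
  induction k with
  | zero => exact ⟨a, by simpa [transferIter] using H⟩
  | succ k ih =>
    obtain ⟨b, hb⟩ := ih
    refine ⟨_, (hb.transfer hlam hA (Ts (k + 1)) (by positivity)).mono (le_of_eq ?_)⟩
    unfold Kinf
    field_simp
    ring

lemma iter_integral (hlam : 1 < lam) (hA : 0 < Astar) (Ts : ℕ → CM lam Astar) {r a : ℝ}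
    (hr : 0 ≤ r) {h : Circle1 → ℝ} (H : PL (Kinf lam Astar + r) a h) (k : ℕ) :
    Integrable (transferIter Ts k h) ∧
      ∫ x : Circle1, transferIter Ts k h x = ∫ x : Circle1, h x := by
  have hl0 : 0 < lam := by linarith
  have hKi := Kinf_nonneg hlam hA
  have hint : ∀ k, Integrable (transferIter Ts k h) := by
    intro k
    obtain ⟨b, hb⟩ := H.iter hlam hA Ts hr k
    exact hb.integrable (by positivity)
  refine ⟨hint k, ?_⟩
  induction k with
  | zero => rfl
  | succ k ih =>
    rw [← ih]
    exact integral_transfer hlam _ (hint k)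

lemma PL.abs_integral {K a : ℝ} {h : Circle1 → ℝ} (H : PL K a h) :
    ∫ x : Circle1, |h x| = ∫ x : Circle1, h x := by
  rw [integral_eq a, integral_eq a]
  refine setIntegral_congr_fun measurableSet_Ioo fun t ht => ?_
  exact abs_of_nonneg (H t ht t ht).1

lemma PL.sub_const {K a c : ℝ} (hK : 0 ≤ K) {h : Circle1 → ℝ} (H : PL K a h) (hc : 0 ≤ c)
    (hl : ∀ s ∈ Ioo a (a + 1), 2 * c ≤ h (s : ℝ)) : PL (2 * K) a (fun x => h x - c) := by
  intro s hs t ht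
  refine ⟨by have := hl s hs; simp only; linarith, ?_⟩
  have h1 := (H s hs t ht).2
  have h2 := hl t ht
  have e : Real.exp (2 * K * |s - t|) = Real.exp (K * |s - t|) * Real.exp (K * |s - t|) := by
    rw [← Real.exp_add]; ring_nf
  have h3 : 1 ≤ Real.exp (K * |s - t|) := Real.one_le_exp (by positivity)
  simp only
  rw [e]
  set q := Real.exp (K * |s - t|)
  set y := h (t : ℝ)
  have h4 : 0 ≤ (q - 1) * (q * (y - c) - c) := by
    apply mul_nonneg (by linarith)
    nlinarith
  nlinarith

lemma main_coupling (hlam : 1 < lam) (hA : 0 < Astar) {R K c : ℝ} (hR : R = Kinf lam Astar + 1)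
    (hK : K = Kinf lam Astar + R) (hc : c = Real.exp (-K) / 2) {N : ℕ} (hN : 3 ≤ lam ^ N) (r q : ℕ) :
    ∀ (Ts : ℕ → CM lam Astar) (a₁ a₂ m : ℝ) (h₁ h₂ : Circle1 → ℝ), 0 ≤ m →
      PL K a₁ h₁ → PL K a₂ h₂ → ∫ x : Circle1, h₁ x = m → ∫ x : Circle1, h₂ x = m →
      ∫ x : Circle1, |transferIter Ts (N * q + r) (fun x => h₁ x - h₂ x) x| ≤
        2 * m * (1 - c) ^ q := by
  have hKi := Kinf_nonneg hlam hA
  have hl0 : 0 < lam := by linarith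
  have hR0 : 0 ≤ R := by linarith
  have hK0 : 0 ≤ K := by linarith
  have hc0 : 0 < c := by rw [hc]; positivity
  have hc1 : c ≤ 1 / 2 := by
    rw [hc]
    have : Real.exp (-K) ≤ 1 := Real.exp_le_one_iff.2 (by linarith)
    linarith
  have hce : Real.exp K * (2 * c) = 1 := by
    rw [hc, mul_div_cancel₀ _ (two_ne_zero), ← Real.exp_add]; simp
  induction q with
  | zero =>
    intro Ts a₁ a₂ m h₁ h₂ hm H1 H2 hm1 hm2
    rw [hK] at H1 H2
    rw [mul_zero, zero_add, transferIter_sub hlam]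
    obtain ⟨i1, e1⟩ := iter_integral hlam hA Ts hR0 H1 r
    obtain ⟨i2, e2⟩ := iter_integral hlam hA Ts hR0 H2 r
    obtain ⟨b1, p1⟩ := H1.iter hlam hA Ts hR0 r
    obtain ⟨b2, p2⟩ := H2.iter hlam hA Ts hR0 r
    calc _ ≤ ∫ x : Circle1, (|transferIter Ts r h₁ x| + |transferIter Ts r h₂ x|) := by
          refine integral_mono (i1.sub i2).abs (i1.abs.add i2.abs) fun x => ?_
          exact abs_sub _ _
      _ = _ := by
          rw [integral_add i1.abs i2.abs, p1.abs_integral, p2.abs_integral, e1, e2, hm1, hm2]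
          ring
  | succ q ih =>
    intro Ts a₁ a₂ m h₁ h₂ hm H1 H2 hm1 hm2
    have hcm : 0 ≤ c * m := by positivity
    have step : ∀ (a : ℝ) (h : Circle1 → ℝ), PL K a h → ∫ x : Circle1, h x = m →
        (∃ b, PL K b (transferIter Ts N (fun x => h x - c * m))) ∧
        ∫ x : Circle1, transferIter Ts N (fun x => h x - c * m) x = (1 - c) * m := by
      intro a h H hm'
      have hsub : PL (2 * K) a (fun x => h x - c * m) := by
        refine H.sub_const hK0 hcm fun s hs => ?_
        have := H.lower hK0 hs
        rw [hm'] at this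
        have h2 : Real.exp K * (2 * (c * m)) ≤ Real.exp K * h (s : ℝ) := by
          calc _ = (Real.exp K * (2 * c)) * m := by ring
            _ = m := by rw [hce, one_mul]
            _ ≤ _ := this
        exact le_of_mul_le_mul_left h2 (Real.exp_pos _)
      have hsub' : PL (Kinf lam Astar + 3 * R) a (fun x => h x - c * m) :=
        hsub.mono (by linarith)
      refine ⟨?_, ?_⟩
      · obtain ⟨b, hb⟩ := hsub'.iter hlam hA Ts (by positivity) N
        refine ⟨b, hb.mono ?_⟩
        rw [hK]
        have : 3 * R / lam ^ N ≤ R := by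
          rw [div_le_iff₀ (by positivity)]
          nlinarith
        linarith
      · rw [(iter_integral hlam hA Ts (by positivity) hsub' N).2,
          integral_sub (H.integrable hK0) (integrable_const _), hm',
          integral_const_circle]
        ring
    obtain ⟨⟨b1, p1⟩, e1⟩ := step a₁ h₁ H1 hm1
    obtain ⟨⟨b2, p2⟩, e2⟩ := step a₂ h₂ H2 hm2
    have := ih (fun i => Ts (N + i)) b1 b2 ((1 - c) * m) _ _ (mul_nonneg (by linarith) hm)
      p1 p2 e1 e2
    rw [← transferIter_sub hlam, ← transferIter_add] at this
    have ee : N + (N * q + r) = N * (q + 1) + r := by ring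
    rw [ee] at this
    have e3 : (fun x => h₁ x - c * m - (h₂ x - c * m)) = fun x => h₁ x - h₂ x := by
      funext x; ring
    rw [e3] at this
    refine this.trans (le_of_eq ?_)
    ring

lemma lip_lift {z : Circle1} {L : ℝ} {g : Circle1 → ℝ} (H : LipOnArc z L g) :
    ∀ s ∈ Ioo (zrep z) (zrep z + 1), ∀ t ∈ Ioo (zrep z) (zrep z + 1),
      |g (s : ℝ) - g (t : ℝ)| ≤ L * |s - t| := by
  have hz : ((zrep z : ℝ) : Circle1) = z := AddCircle.coe_equivIco
  have hne : ∀ s ∈ Ioo (zrep z) (zrep z + 1), (s : Circle1) ≠ z := by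
    intro s hs h
    rw [← hz, AddCircle.coe_eq_coe_iff_of_mem_Ico (a := zrep z) ⟨hs.1.le, hs.2⟩
      ⟨le_rfl, by linarith⟩] at h
    exact hs.1.ne' h
  have hco : ∀ s ∈ Ioo (zrep z) (zrep z + 1), arcCoord z (s : Circle1) = s := fun s hs =>
    AddCircle.equivIoc_coe_of_mem ⟨hs.1, hs.2.le⟩
  intro s hs t ht
  have := H s t (hne s hs) (hne t ht)
  rwa [arcDist, hco s hs, hco t ht] at this

lemma integral_bounds {a l u : ℝ} {h : Circle1 → ℝ} (hi : Integrable h)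
    (H : ∀ s ∈ Ioo a (a + 1), l ≤ h (s : ℝ) ∧ h (s : ℝ) ≤ u) :
    l ≤ ∫ x : Circle1, h x ∧ ∫ x : Circle1, h x ≤ u := by
  have hi' : IntegrableOn (fun t : ℝ => h (t : Circle1)) (Ioo a (a + 1)) := 
    (lift_of_integrable a (a + 1) hi).1.mono_set Ioo_subset_Ioc_self
  rw [← integral_const_circle l, ← integral_const_circle u, integral_eq a, integral_eq a,
    integral_eq a]
  exact ⟨setIntegral_mono_on (integrableOn_const (by simp)) hi' measurableSet_Ioo
    fun s hs => (H s hs).1, setIntegral_mono_on hi' (integrableOn_const (by simp))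
    measurableSet_Ioo fun s hs => (H s hs).2⟩

end MB

/-- Corollary `cor:memory_bounds`.  There is `ϑ ∈ (0,1)` (depending only on
`λ, A*`) such that for every `L > 0` there is `C > 0` (depending only on `L, λ, A*`) with
`‖ℒ_k⋯ℒ_1 g‖_{L¹(𝔪)} ≤ Cϑᵏ` whenever `g` is Lipschitz on `J_z` with constant `L` and has
zero mean. -/
theorem statement5 {lam Astar : ℝ} (hlam : 1 < lam) (hA : 0 < Astar) :
    ∃ θ : ℝ, θ ∈ Set.Ioo (0 : ℝ) 1 ∧
      ∀ L : ℝ, 0 < L → ∃ C : ℝ, 0 < C ∧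
        ∀ (z : Circle1) (g : Circle1 → ℝ), LipOnArc z L g → (∫ x : Circle1, g x) = 0 →
          ∀ (Ts : ℕ → CM lam Astar) (k : ℕ),
            l1norm (transferIter Ts k g) ≤ C * θ ^ k := by
  obtain ⟨N, hN⟩ := pow_unbounded_of_one_lt 3 hlam
  have hKi := MB.Kinf_nonneg hlam hA
  set K := MB.Kinf lam Astar + (MB.Kinf lam Astar + 1) with hK
  set c := Real.exp (-K) / 2 with hc
  have hc0 : 0 < c := by positivity
  have hc1 : c ≤ 1 / 2 := by
    have : Real.exp (-K) ≤ 1 := Real.exp_le_one_iff.2 (by linarith)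
    linarith
  have hN0 : N ≠ 0 := by
    rintro rfl
    norm_num at hN
  have hN0' : (0:ℝ) < N := by exact_mod_cast Nat.pos_of_ne_zero hN0
  set θ := (1 - c) ^ ((N : ℝ)⁻¹) with hθ
  have hθ0 : 0 < θ := Real.rpow_pos_of_pos (by linarith) _
  have hθ1 : θ < 1 := Real.rpow_lt_one (by linarith) (by linarith) (by positivity)
  have hθN : θ ^ N = 1 - c := Real.rpow_inv_natCast_pow (by linarith) hN0
  refine ⟨θ, ⟨hθ0, hθ1⟩, fun L hL => ⟨6 * L / (1 - c), div_pos (by linarith) (by linarith), ?_⟩⟩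
  intro z g hg hg0 Ts k
  have hl := MB.lip_lift hg
  set a := zrep z
  have hmid : a + 1 / 2 ∈ Set.Ioo a (a + 1) := by constructor <;> linarith
  set g0 := g ((a + 1 / 2 : ℝ)) with hg0'
  set m := 2 * L - g0 with hm
  have hbd : ∀ s ∈ Set.Ioo a (a + 1), |g (s : ℝ) - g0| ≤ L := by
    intro s hs
    refine (hl s hs _ hmid).trans ?_
    have : |s - (a + 1 / 2)| ≤ 1 := by rw [abs_le]; constructor <;> linarith [hs.1, hs.2]
    nlinarith
  have hP : MB.PL 1 a (fun x => g x + m) := by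
    intro s hs t ht
    have h1 := abs_le.1 (hbd s hs)
    have h2 := abs_le.1 (hbd t ht)
    have h3 := (abs_le.1 (hl s hs t ht)).2
    simp only
    refine ⟨by linarith, ?_⟩
    have h4 := Real.add_one_le_exp (1 * |s - t|)
    have h5 : L ≤ g (t : ℝ) + m := by linarith
    have h6 : 0 ≤ |s - t| := abs_nonneg _
    calc g (s : ℝ) + m ≤ (g (t : ℝ) + m) + L * |s - t| := by linarith
      _ ≤ (1 * |s - t| + 1) * (g (t : ℝ) + m) := by nlinarith
      _ ≤ _ := mul_le_mul_of_nonneg_right h4 (by linarith)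
  have hint : Integrable g := by
    have := (hP.integrable zero_le_one).sub (integrable_const m)
    refine this.congr (Eventually.of_forall fun x => ?_)
    simp
  have hmi : ∫ x : Circle1, (g x + m) = m := by
    rw [integral_add hint (integrable_const m), hg0, MB.integral_const_circle, zero_add]
  have hmb : L ≤ m ∧ m ≤ 3 * L := by
    rw [← hmi]
    refine MB.integral_bounds (a := a) (hP.integrable zero_le_one) fun s hs => ?_
    have h1 := abs_le.1 (hbd s hs)
    constructor <;> linarith
  have hm0 : 0 ≤ m := by linarith
  have hP2 : MB.PL 1 a (fun _ => m) := by
    intro s hs t ht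
    refine ⟨hm0, ?_⟩
    have : 1 ≤ Real.exp (1 * |s - t|) := Real.one_le_exp (by positivity)
    simp only
    nlinarith
  have hK1 : 1 ≤ K := by linarith
  have key := MB.main_coupling hlam hA rfl hK hc hN.le (k % N) (k / N) Ts a a m _ _ hm0
    (hP.mono hK1) (hP2.mono hK1) hmi (MB.integral_const_circle m)
  simp only [add_sub_cancel_right] at key
  rw [Nat.div_add_mod] at key
  refine key.trans ?_
  have hk : (1 - c) ^ (k / N) * (1 - c) ≤ θ ^ k := by
    rw [← pow_succ, ← hθN, ← pow_mul]
    apply pow_le_pow_of_le_one hθ0.le hθ1.le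
    have := Nat.div_add_mod k N
    have := Nat.mod_lt k (Nat.pos_of_ne_zero hN0)
    rw [mul_add]
    omega
  rw [div_mul_eq_mul_div, le_div_iff₀ (by linarith)]
  have hp : 0 ≤ (1 - c) ^ (k / N) * (1 - c) := mul_nonneg (pow_nonneg (by linarith) _) (by linarith)
  calc 2 * m * (1 - c) ^ (k / N) * (1 - c) = 2 * m * ((1 - c) ^ (k / N) * (1 - c)) := by ring
    _ ≤ 6 * L * θ ^ k := by
        apply mul_le_mul (by linarith) hk hp (by positivity)
end

section
/- There exists b > 0 such that the following holds. For every η' < η and every probability density ρ on 𝕊 that is Lipschitz on J_z with constant L > 0 for some z ∈ 𝕊, writing ρ_{n,k} = ℒ_{T_{n,k}} ⋯ ℒ_{T_{n,1}} ρ for the pushforward density and ρ̂_{n,k} for the SRB density of T_{n,k}, one has ‖ρ_{n,k} − ρ̂_{n,k}‖_{L¹(𝔪)} ≤ C n^{−η'} for all n and all k ≥ b·log n, where the constant C > 0 depends only on η' and L. -/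
open MeasureTheory Filter Topology Set UniformConvergence

open MeasureTheory Filter Topology Set UniformConvergence

namespace PF

variable {lam Astar : ℝ}

theorem F_diff (T : CM lam Astar) : Differentiable ℝ T.F :=
  T.contDiff.differentiable (by norm_num)

theorem dF_diff (T : CM lam Astar) : Differentiable ℝ (deriv T.F) := by
  have h : ContDiff ℝ (1+1) T.F := by simpa [one_add_one_eq_two] using T.contDiff
  exact ((contDiff_succ_iff_deriv.1 h).2.2).differentiable (by norm_num)

theorem F_strictMono (hlam : 1 < lam) (T : CM lam Astar) : StrictMono T.F :=
  strictMono_of_deriv_pos fun x => lt_of_lt_of_le (by linarith) (T.expanding x)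

theorem F_expand (_hlam : 1 < lam) (T : CM lam Astar) {x y : ℝ} (hxy : x ≤ y) :
    lam * (y - x) ≤ T.F y - T.F x := by
  have := Convex.mul_sub_le_image_sub_of_le_deriv (D := univ) convex_univ (F_diff T).continuous.continuousOn
    (F_diff T).differentiableOn (C := lam) (fun x _ => T.expanding x) x (mem_univ _) y (mem_univ _) hxy
  exact this

theorem F_expand_abs (hlam : 1 < lam) (T : CM lam Astar) (x y : ℝ) :
    lam * |x - y| ≤ |T.F x - T.F y| := by
  rcases le_total x y with h | h
  · have := F_expand hlam T h
    rw [abs_sub_comm, abs_of_nonneg (by linarith), abs_sub_comm]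
    exact this.trans (le_abs_self _)
  · have := F_expand hlam T h
    rw [abs_of_nonneg (by linarith)]
    exact this.trans (le_abs_self _)

theorem F_surj (hlam : 1 < lam) (T : CM lam Astar) : Function.Surjective T.F := by
  apply (F_diff T).continuous.surjective
  · refine tendsto_atTop_mono' atTop (f₁ := fun x => T.F 0 + lam * x) ?_ ?_
    · filter_upwards [eventually_ge_atTop 0] with x hx
      have := F_expand hlam T hx
      linarith
    · exact tendsto_atTop_add_const_left _ _ (tendsto_id.const_mul_atTop (by linarith))
  · refine tendsto_atBot_mono' atBot (f₁ := fun x => T.F 0 + lam * x) ?_ ?_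
    · filter_upwards [eventually_le_atBot 0] with x hx
      have := F_expand hlam T hx
      linarith
    · exact tendsto_atBot_add_const_left _ _ (tendsto_id.const_mul_atBot (by linarith))

/-- inverse of the lift -/
noncomputable def E (T : CM lam Astar) : ℝ → ℝ := Function.invFun T.F

theorem F_E (hlam : 1 < lam) (T : CM lam Astar) (u : ℝ) : T.F (E T u) = u :=
  Function.rightInverse_invFun (F_surj hlam T) u

theorem E_F (hlam : 1 < lam) (T : CM lam Astar) (u : ℝ) : E T (T.F u) = u :=
  Function.leftInverse_invFun (F_strictMono hlam T).injective u

theorem E_lip (hlam : 1 < lam) (T : CM lam Astar) (u v : ℝ) :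
    |E T u - E T v| ≤ |u - v| / lam := by
  have := F_expand_abs hlam T (E T u) (E T v)
  rw [F_E hlam, F_E hlam] at this
  rw [le_div_iff₀ (by linarith)]
  linarith

theorem F_add_int (T : CM lam Astar) (x : ℝ) (n : ℤ) : T.F (x + n) = T.F x + n * T.deg := by
  induction n using Int.induction_on with
  | zero => simp
  | succ i ih =>
    have := T.lift_add_one (x + i)
    push_cast at *
    rw [← add_assoc, this, ih]; ring
  | pred i ih =>
    have := T.lift_add_one (x + (-i - 1))
    push_cast at *
    have e : x + (-i - 1) + 1 = x + -(i:ℝ) := by ring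
    rw [e, ih] at this
    linarith

theorem dF_add_int (T : CM lam Astar) (x : ℝ) (n : ℤ) : deriv T.F (x + n) = deriv T.F x := by
  rw [← deriv_comp_add_const]
  have : (fun y => T.F (y + n)) = fun y => T.F y + n * T.deg := by
    funext y; exact F_add_int T y n
  rw [this]; simp

theorem E_add (hlam : 1 < lam) (T : CM lam Astar) (x : ℝ) (n : ℤ) :
    E T (x + n * T.deg) = E T x + n := by
  apply (F_strictMono hlam T).injective
  rw [F_E hlam, F_add_int, F_E hlam]

theorem coe_eq_iff (x y : ℝ) : (x : Circle1) = (y : Circle1) ↔ ∃ n : ℤ, x = y + n := by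
  rw [← sub_eq_zero, ← AddCircle.coe_sub, AddCircle.coe_eq_zero_iff]
  constructor
  · rintro ⟨n, hn⟩; exact ⟨n, by simp at hn; linarith⟩
  · rintro ⟨n, hn⟩; exact ⟨n, by simp; linarith⟩

theorem rep_coe (x : ℝ) : ∃ n : ℤ, ((AddCircle.equivIco 1 0 (x : Circle1) : ℝ)) = x + n := by
  apply (coe_eq_iff _ _).1
  exact AddCircle.coe_equivIco

theorem toMap_coe (T : CM lam Astar) (x : ℝ) : T.toMap (x : Circle1) = (T.F x : Circle1) := by
  obtain ⟨n, hn⟩ := rep_coe x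
  unfold CM.toMap
  rw [hn, F_add_int, coe_eq_iff]
  exact ⟨n * T.deg, by push_cast; ring⟩

theorem dmap_coe (T : CM lam Astar) (x : ℝ) : T.dmap (x : Circle1) = deriv T.F x := by
  obtain ⟨n, hn⟩ := rep_coe x
  unfold CM.dmap
  rw [hn, dF_add_int]

theorem deg_pos (hlam : 1 < lam) (T : CM lam Astar) : 0 < T.deg := by
  have h := T.lift_add_one 0
  have := F_strictMono hlam T (show (0:ℝ) < 0 + 1 by norm_num)
  rw [h] at this
  exact_mod_cast (by linarith : (0:ℝ) < T.deg)

/-- the degree as a natural number -/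
def dN (T : CM lam Astar) : ℕ := T.deg.toNat

theorem dN_cast (hlam : 1 < lam) (T : CM lam Astar) : ((dN T : ℕ) : ℤ) = T.deg :=
  Int.toNat_of_nonneg (deg_pos hlam T).le

theorem dN_castR (hlam : 1 < lam) (T : CM lam Astar) : ((dN T : ℕ) : ℝ) = T.deg := by
  exact_mod_cast congrArg (Int.cast (R := ℝ)) (dN_cast hlam T)

theorem transfer_coe (hlam : 1 < lam) (T : CM lam Astar) (g : Circle1 → ℝ) (X : ℝ) :
    transfer T g (X : Circle1) =
      ∑ i ∈ Finset.range (dN T), g (E T (X + i) : ℝ) / deriv T.F (E T (X + i)) := by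
  let e : Fin (dN T) → {y : Circle1 // T.toMap y = (X : Circle1)} := fun i =>
    ⟨((E T (X + (i:ℕ)) : ℝ) : Circle1), by
      rw [toMap_coe, F_E hlam, coe_eq_iff]; exact ⟨(i:ℕ), by simp⟩⟩
  have he : Function.Bijective e := by
    constructor
    · intro i j hij
      have h1 : ((E T (X + (i:ℕ)) : ℝ) : Circle1) = ((E T (X + (j:ℕ)) : ℝ) : Circle1) :=
        congrArg Subtype.val hij
      obtain ⟨n, hn⟩ := (coe_eq_iff _ _).1 h1
      have h2 := congrArg T.F hn
      rw [F_add_int, F_E hlam, F_E hlam, ← dN_castR hlam] at h2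
      have h3 : ((i:ℕ):ℤ) = (j:ℕ) + n * (dN T : ℕ) := by
        have : ((i:ℕ):ℝ) = (j:ℕ) + n * (dN T : ℕ) := by linarith
        exact_mod_cast this
      have h4 : ((i:ℕ):ℤ) % (dN T : ℕ) = ((j:ℕ):ℤ) % (dN T : ℕ) := by
        rw [h3]; simp
      rw [Int.emod_eq_of_lt (by simp) (by exact_mod_cast i.2),
        Int.emod_eq_of_lt (by simp) (by exact_mod_cast j.2)] at h4
      exact Fin.ext (by exact_mod_cast h4)
    · rintro ⟨y, hy⟩
      obtain ⟨Y, rfl⟩ := QuotientAddGroup.mk_surjective y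
      change T.toMap (Y : Circle1) = _ at hy
      rw [toMap_coe] at hy
      obtain ⟨q, hq⟩ := (coe_eq_iff _ _).1 hy
      have hd := deg_pos hlam T
      have hr0 := Int.emod_nonneg q hd.ne'
      have hr1 := Int.emod_lt_of_pos q hd
      refine ⟨⟨(q % T.deg).toNat, ?_⟩, ?_⟩
      · zify; rw [Int.toNat_of_nonneg hr0, dN_cast hlam]; exact hr1
      · apply Subtype.ext
        change ((E T (X + (((q % T.deg).toNat : ℕ) : ℝ)) : ℝ) : Circle1) = (Y : Circle1)
        rw [coe_eq_iff]
        refine ⟨- (q / T.deg), ?_⟩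
        apply (F_strictMono hlam T).injective
        have h5 : (((q % T.deg).toNat : ℕ) : ℝ) = ((q % T.deg : ℤ) : ℝ) := by
          exact_mod_cast congrArg (Int.cast (R := ℝ)) (Int.toNat_of_nonneg hr0)
        rw [F_E hlam, F_add_int, hq, h5]
        have h6 : ((q % T.deg : ℤ) : ℝ) + (T.deg : ℝ) * ((q / T.deg : ℤ) : ℝ) = q := by
          exact_mod_cast Int.emod_add_mul_ediv q T.deg
        push_cast
        linarith
  unfold transfer
  rw [← (Equiv.ofBijective e he).tsum_eq, tsum_fintype, Finset.sum_range]
  refine Finset.sum_congr rfl fun i _ => ?_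
  simp only [Equiv.ofBijective_apply, e]
  rw [dmap_coe]

theorem dF_pos (hlam : 1 < lam) (T : CM lam Astar) (x : ℝ) : 0 < deriv T.F x :=
  lt_of_lt_of_le (by linarith) (T.expanding x)

theorem transfer_mono (hlam : 1 < lam) (T : CM lam Astar) {g h : Circle1 → ℝ} (H : ∀ x, g x ≤ h x)
    (x : Circle1) : transfer T g x ≤ transfer T h x := by
  obtain ⟨X, rfl⟩ := QuotientAddGroup.mk_surjective x
  rw [transfer_coe hlam, transfer_coe hlam]
  refine Finset.sum_le_sum fun i _ => ?_
  have := dF_pos hlam T (E T (X + i))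
  gcongr
  exact H _

theorem transfer_lin (hlam : 1 < lam) (T : CM lam Astar) (g h : Circle1 → ℝ) (a b : ℝ)
    (x : Circle1) : transfer T (fun y => a * g y + b * h y) x = a * transfer T g x + b * transfer T h x := by
  obtain ⟨X, rfl⟩ := QuotientAddGroup.mk_surjective x
  rw [transfer_coe hlam, transfer_coe hlam, transfer_coe hlam, Finset.mul_sum, Finset.mul_sum,
    ← Finset.sum_add_distrib]
  refine Finset.sum_congr rfl fun i _ => ?_
  ring

theorem transfer_sub (hlam : 1 < lam) (T : CM lam Astar) (g h : Circle1 → ℝ) :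
    transfer T (fun y => g y - h y) = fun x => transfer T g x - transfer T h x := by
  funext x
  have := transfer_lin hlam T g h 1 (-1) x
  simp only [one_mul, neg_mul, ← sub_eq_add_neg] at this
  exact this

theorem transfer_abs (hlam : 1 < lam) (T : CM lam Astar) (g : Circle1 → ℝ) (x : Circle1) :
    |transfer T g x| ≤ transfer T (fun y => |g y|) x := by
  obtain ⟨X, rfl⟩ := QuotientAddGroup.mk_surjective x
  rw [transfer_coe hlam, transfer_coe hlam]
  refine (Finset.abs_sum_le_sum_abs _ _).trans (Finset.sum_le_sum fun i _ => ?_)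
  rw [abs_div, abs_of_pos (dF_pos hlam T _)]

theorem transfer_nonneg (hlam : 1 < lam) (T : CM lam Astar) {g : Circle1 → ℝ} (hg : ∀ x, 0 ≤ g x)
    (x : Circle1) : 0 ≤ transfer T g x :=
  (abs_nonneg _).trans ((transfer_abs hlam T g x).trans (le_of_eq (by simp only [abs_of_nonneg (hg _)])))

theorem transfer_mul_comp (_hlam : 1 < lam) (T : CM lam Astar) (φ g : Circle1 → ℝ) (x : Circle1) :
    transfer T (fun y => φ (T.toMap y) * g y) x = φ x * transfer T g x := by
  unfold transfer
  rw [← tsum_mul_left]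
  refine tsum_congr fun y => ?_
  simp only [y.2]; ring

end PF

open MeasureTheory Filter Topology Set UniformConvergence

namespace PF

variable {lam Astar : ℝ}

theorem int_iff (g : Circle1 → ℝ) (t : ℝ) :
    Integrable g ↔ IntegrableOn (fun x : ℝ => g (x : Circle1)) (Ioc t (t + 1)) := by
  constructor
  · intro h
    exact (AddCircle.measurePreserving_mk 1 t).integrable_comp_of_integrable h
  · intro h
    have e : g = (fun x : ℝ => g (x : Circle1)) ∘ (Subtype.val ∘ AddCircle.equivIoc 1 t) := by
      funext x
      simp
    rw [e]
    refine MeasurePreserving.integrable_comp_of_integrable ?_ h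
    exact (measurePreserving_subtype_coe measurableSet_Ioc).comp
      (AddCircle.measurePreserving_equivIoc 1)

theorem F_image (hlam : 1 < lam) (T : CM lam Astar) :
    T.F '' (Ioc (E T 0) (E T 0 + 1)) = Ioc (0:ℝ) (dN T) := by
  have h1 : T.F (E T 0 + 1) = dN T := by
    rw [T.lift_add_one, F_E hlam, dN_castR hlam]; simp
  ext u
  constructor
  · rintro ⟨y, ⟨hy1, hy2⟩, rfl⟩
    refine ⟨?_, ?_⟩
    · have := F_strictMono hlam T hy1; rwa [F_E hlam] at this
    · have := (F_strictMono hlam T).monotone hy2; rwa [h1] at this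
  · rintro ⟨h2, h3⟩
    refine ⟨E T u, ⟨?_, ?_⟩, F_E hlam T u⟩
    · rw [← (F_strictMono hlam T).lt_iff_lt, F_E hlam, F_E hlam]; exact h2
    · rw [← (F_strictMono hlam T).le_iff_le, F_E hlam, h1]; exact h3

theorem transfer_integrable_and (hlam : 1 < lam) (T : CM lam Astar) {g : Circle1 → ℝ}
    (hg : Integrable g) : Integrable (transfer T g) ∧ ∫ x, transfer T g x = ∫ x, g x := by
  set h : ℝ → ℝ := fun u => g (E T u : ℝ) / deriv T.F (E T u) with hh
  have hs : MeasurableSet (Ioc (E T 0) (E T 0 + 1)) := measurableSet_Ioc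
  have hd : ∀ x ∈ Ioc (E T 0) (E T 0 + 1),
      HasDerivWithinAt T.F (deriv T.F x) (Ioc (E T 0) (E T 0 + 1)) x := fun x _ =>
    ((F_diff T) x).hasDerivAt.hasDerivWithinAt
  have hi : InjOn T.F (Ioc (E T 0) (E T 0 + 1)) := (F_strictMono hlam T).injective.injOn
  have key : (fun x => |deriv T.F x| • h (T.F x)) = fun x : ℝ => g (x : Circle1) := by
    funext x
    have := dF_pos hlam T x
    simp only [hh, E_F hlam, abs_of_pos this, smul_eq_mul]
    field_simp
  have A1 : IntegrableOn h (Ioc (0:ℝ) (dN T)) := by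
    rw [← F_image hlam T, integrableOn_image_iff_integrableOn_abs_deriv_smul hs hd hi, key]
    exact (int_iff g _).1 hg
  have A2 : ∫ x in Ioc (0:ℝ) (dN T), h x = ∫ x, g x := by
    rw [← F_image hlam T, integral_image_eq_integral_abs_deriv_smul hs hd hi, key]
    exact AddCircle.integral_preimage 1 _ g
  have hL : (fun X : ℝ => transfer T g (X : Circle1)) =
      fun X => ∑ i ∈ Finset.range (dN T), h (X + i) := by
    funext X; exact transfer_coe hlam T g X
  have I0 : IntervalIntegrable h volume 0 (dN T) := by
    rw [intervalIntegrable_iff_integrableOn_Ioc_of_le (by positivity)]; exact A1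
  have I1 : ∀ i < dN T, IntervalIntegrable h volume ((i:ℕ):ℝ) ((i+1:ℕ):ℝ) := by
    intro i hi
    apply I0.mono_set
    rw [uIcc_of_le (by simp), uIcc_of_le (by positivity)]
    apply Icc_subset_Icc (by positivity)
    exact_mod_cast hi
  have I2 : ∀ i < dN T, IntervalIntegrable (fun X => h (X + i)) volume 0 1 := by
    intro i hi
    have := (I1 i hi).comp_add_right i
    simpa using this
  constructor
  · rw [int_iff _ 0, hL, ← intervalIntegrable_iff_integrableOn_Ioc_of_le (by simp), zero_add]
    have := IntervalIntegrable.sum (μ := volume) (a := 0) (b := 1) (Finset.range (dN T))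
      (f := fun i X => h (X + i)) (fun i hi => I2 i (Finset.mem_range.1 hi))
    have e : (fun X => ∑ i ∈ Finset.range (dN T), h (X + i)) =
        ∑ i ∈ Finset.range (dN T), fun X => h (X + (i:ℝ)) := by
      funext X; simp
    rw [e]; exact this
  · rw [← AddCircle.intervalIntegral_preimage 1 0, hL, zero_add,
      intervalIntegral.integral_finsetSum (fun i hi => I2 i (Finset.mem_range.1 hi)), ← A2,
      ← intervalIntegral.integral_of_le (by positivity)]
    have := intervalIntegral.sum_integral_adjacent_intervals (μ := volume) (f := h)
      (a := fun i : ℕ => (i:ℝ)) (n := dN T) I1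
    simp only [Nat.cast_zero] at this
    rw [← this]
    refine Finset.sum_congr rfl fun i _ => ?_
    rw [intervalIntegral.integral_comp_add_right]
    push_cast
    rw [zero_add, add_comm (1:ℝ)]

theorem transfer_integrable (hlam : 1 < lam) (T : CM lam Astar) {g : Circle1 → ℝ}
    (hg : Integrable g) : Integrable (transfer T g) := (transfer_integrable_and hlam T hg).1

theorem transfer_integral (hlam : 1 < lam) (T : CM lam Astar) {g : Circle1 → ℝ}
    (hg : Integrable g) : ∫ x, transfer T g x = ∫ x, g x := (transfer_integrable_and hlam T hg).2

theorem transfer_density (hlam : 1 < lam) (T : CM lam Astar) {g : Circle1 → ℝ}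
    (hg : IsProbDensity g) : IsProbDensity (transfer T g) :=
  ⟨transfer_integrable hlam T hg.1, by rw [transfer_integral hlam T hg.1]; exact hg.2.1,
    transfer_nonneg hlam T hg.2.2⟩

theorem l1_transfer (hlam : 1 < lam) (T : CM lam Astar) {g : Circle1 → ℝ}
    (hg : Integrable g) : l1norm (transfer T g) ≤ l1norm g := by
  unfold l1norm
  rw [← transfer_integral hlam T hg.abs]
  exact integral_mono (transfer_integrable hlam T hg).abs (transfer_integrable hlam T hg.abs)
    (transfer_abs hlam T g)

theorem l1_transfer_sub (hlam : 1 < lam) (T : CM lam Astar) {g h : Circle1 → ℝ}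
    (hg : Integrable g) (hh : Integrable h) :
    l1norm (fun x => transfer T g x - transfer T h x) ≤ l1norm (fun x => g x - h x) := by
  have := l1_transfer hlam T (hg.sub hh)
  change l1norm (transfer T (fun y => g y - h y)) ≤ _ at this
  rw [transfer_sub hlam] at this
  exact this

theorem l1_tri {f g h : Circle1 → ℝ} (hf : Integrable f) (hg : Integrable g) (hh : Integrable h) :
    l1norm (fun x => f x - h x) ≤ l1norm (fun x => f x - g x) + l1norm (fun x => g x - h x) := by
  unfold l1norm
  have := integral_add (hf.sub hg).abs (hg.sub hh).abs
  simp only [Pi.sub_apply] at this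
  rw [← this]
  exact integral_mono (hf.sub hh).abs ((hf.sub hg).abs.add (hg.sub hh).abs)
    (fun x => abs_sub_le _ _ _)

theorem l1_nonneg (f : Circle1 → ℝ) : 0 ≤ l1norm f := integral_nonneg fun _ => abs_nonneg _

theorem l1_comm (f g : Circle1 → ℝ) : l1norm (fun x => f x - g x) = l1norm (fun x => g x - f x) := by
  unfold l1norm; simp only [abs_sub_comm]

theorem l1_density_le {f g : Circle1 → ℝ} (hf : IsProbDensity f) (hg : IsProbDensity g) :
    l1norm (fun x => f x - g x) ≤ 2 := by
  unfold l1norm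
  have : (2:ℝ) = ∫ x, (f x + g x) := by
    rw [integral_add hf.1 hg.1, hf.2.1, hg.2.1]; norm_num
  rw [this]
  refine integral_mono (hf.1.sub hg.1).abs (hf.1.add hg.1) fun x => ?_
  have h1 := hf.2.2 x
  have h2 := hg.2.2 x
  simp only
  rw [abs_le]; constructor <;> simp <;> linarith

theorem toMap_measurable (T : CM lam Astar) : Measurable T.toMap := by
  have h1 : Measurable (fun x : Circle1 => ((AddCircle.equivIco 1 0 x : ℝ))) :=
    measurable_subtype_coe.comp (AddCircle.measurableEquivIco 1 0).measurable
  exact AddCircle.measurable_mk'.comp ((F_diff T).continuous.measurable.comp h1)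

theorem srb_fixed (hlam : 1 < lam) (T : CM lam Astar) {r : Circle1 → ℝ} (hr : IsSRBDensity T r) :
    transfer T r =ᵐ[volume] r := by
  obtain ⟨⟨hi, h1, h0⟩, -, hinv⟩ := hr
  refine Integrable.ae_eq_of_forall_setIntegral_eq _ _ (transfer_integrable hlam T hi) hi ?_
  intro B hB _
  have hTB : MeasurableSet (T.toMap ⁻¹' B) := toMap_measurable T hB
  have e1 : ∫ x in B, transfer T r x = ∫ x in T.toMap ⁻¹' B, r x := by
    rw [← integral_indicator hB, ← integral_indicator hTB]
    rw [← transfer_integral hlam T (hi.indicator hTB)]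
    congr 1
    funext x
    have := transfer_mul_comp hlam T (B.indicator (fun _ => (1:ℝ))) r x
    have e : (fun y => B.indicator (fun _ => (1:ℝ)) (T.toMap y) * r y) = (T.toMap ⁻¹' B).indicator r := by
      funext y
      by_cases hy : T.toMap y ∈ B
      · rw [indicator_of_mem hy, indicator_of_mem (show y ∈ T.toMap ⁻¹' B from hy), one_mul]
      · rw [indicator_of_notMem hy, indicator_of_notMem (show y ∉ T.toMap ⁻¹' B from hy), zero_mul]
    rw [e] at this
    rw [this]
    by_cases hx : x ∈ B
    · simp [hx]
    · simp [hx]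
  rw [e1]
  have hm := congrArg (fun m => m B) hinv
  rw [Measure.map_apply (toMap_measurable T) hB, withDensity_apply _ hB, withDensity_apply _ hTB] at hm
  rw [integral_eq_lintegral_of_nonneg_ae (Eventually.of_forall h0) hi.aestronglyMeasurable.restrict,
    integral_eq_lintegral_of_nonneg_ae (Eventually.of_forall h0) hi.aestronglyMeasurable.restrict, hm]

theorem l1_srb (hlam : 1 < lam) (T : CM lam Astar) {r u : Circle1 → ℝ} (hr : IsSRBDensity T r)
    (hu : Integrable u) : l1norm (fun x => transfer T u x - r x) ≤ l1norm (fun x => u x - r x) := by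
  refine le_trans (le_of_eq ?_) (l1_transfer_sub hlam T hu hr.1.1)
  unfold l1norm
  refine integral_congr_ae ?_
  filter_upwards [srb_fixed hlam T hr] with x hx
  rw [hx]

end PF

open MeasureTheory Filter Topology Set UniformConvergence

namespace PF

variable {lam Astar : ℝ}

/-- log-Lipschitz functions -/
def LogLip (a : ℝ) (g : Circle1 → ℝ) : Prop :=
  ∀ x y : Circle1, g x ≤ Real.exp (a * dist x y) * g y

/-- log-Lipschitz densities -/
def DD (a : ℝ) (g : Circle1 → ℝ) : Prop := IsProbDensity g ∧ LogLip a g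

theorem dist_coe (a b : ℝ) : dist (a : Circle1) (b : Circle1) = |a - b - round (a - b)| := by
  rw [dist_eq_norm, ← AddCircle.coe_sub, UnitAddCircle.norm_eq]

theorem dist_coe_le (a b : ℝ) : dist (a : Circle1) (b : Circle1) ≤ |a - b| := by
  rw [dist_coe]
  simpa using round_le (a - b) 0

theorem dist_le_half (x y : Circle1) : dist x y ≤ 1 / 2 := by
  rw [dist_eq_norm]
  simpa using AddCircle.norm_le_half_period (p := (1:ℝ)) (x := x - y) one_ne_zero

theorem exists_lifts (x y : Circle1) : ∃ X Y : ℝ, (X : Circle1) = x ∧ (Y : Circle1) = y ∧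
    |X - Y| = dist x y := by
  obtain ⟨a, rfl⟩ := QuotientAddGroup.mk_surjective x
  obtain ⟨b, rfl⟩ := QuotientAddGroup.mk_surjective y
  refine ⟨a, b + round (a - b), rfl, (coe_eq_iff _ _).2 ⟨_, rfl⟩, ?_⟩
  change _ = dist (a : Circle1) (b : Circle1)
  rw [dist_coe]; congr 1; ring

theorem dF_lip (T : CM lam Astar) (x y : ℝ) : |deriv T.F x - deriv T.F y| ≤ Astar * |x - y| := by
  have := Convex.norm_image_sub_le_of_norm_deriv_le (f := deriv T.F) (s := univ) (C := Astar)
    (fun z _ => dF_diff T z) (fun z _ => T.second_bound z) convex_univ (mem_univ y) (mem_univ x)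
  exact this

theorem transfer_compare (hlam : 1 < lam) (hA : 0 < Astar) (T₁ T₂ : CM lam Astar) {δ : ℝ} (p : ℤ)
    (hp : ∀ x, |T₁.F x - T₂.F x - p| ≤ δ) (hd : ∀ x, |deriv T₁.F x - deriv T₂.F x| ≤ δ)
    (hdeg : T₁.deg = T₂.deg) {a : ℝ} (ha : 0 ≤ a) {g : Circle1 → ℝ} (hg0 : ∀ x, 0 ≤ g x)
    (hg : LogLip a g) (X Y s : ℝ) (hs : s = (δ + |X - Y|) / lam) :
    transfer T₁ g (X : Circle1) ≤ Real.exp (a * s + (Astar * s + δ) / lam) *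
      transfer T₂ g (Y : Circle1) := by
  have hδ : 0 ≤ δ := (abs_nonneg _).trans (hp 0)
  have hs0 : 0 ≤ s := by rw [hs]; have := abs_nonneg (X - Y); have : 0 < lam := by linarith
                         positivity
  have hY : (Y : Circle1) = ((Y - p : ℝ) : Circle1) := (coe_eq_iff _ _).2 ⟨p, by ring⟩
  rw [hY, transfer_coe hlam, transfer_coe hlam]
  have hN : dN T₂ = dN T₁ := by unfold dN; rw [hdeg]
  rw [hN, Finset.mul_sum]
  refine Finset.sum_le_sum fun i _ => ?_
  set y := E T₁ (X + i) with hy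
  set y' := E T₂ (Y - p + i) with hy'
  have hF1 : T₁.F y = X + i := F_E hlam T₁ _
  have hyy : |y - y'| ≤ s := by
    have h1 := F_expand_abs hlam T₂ y y'
    rw [hy', F_E hlam, ← hy'] at h1
    have h2 := hp y
    rw [hF1] at h2
    rw [hs, le_div_iff₀ (by linarith)]
    have h3 : |T₂.F y - (Y - p + i)| ≤ δ + |X - Y| := by
      have : T₂.F y - (Y - p + i) = -(X + i - T₂.F y - p) + (X - Y) := by ring
      rw [this]
      refine (abs_add_le _ _).trans ?_
      rw [abs_neg]; linarith
    linarith
  have hgy : g (y : Circle1) ≤ Real.exp (a * s) * g (y' : Circle1) := by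
    refine (hg _ (y' : Circle1)).trans ?_
    have := hg0 (y' : Circle1)
    have := (dist_coe_le y y').trans hyy
    gcongr
  have hp1 := dF_pos hlam T₁ y
  have hp2 := dF_pos hlam T₂ y'
  have hD : deriv T₂.F y' ≤ Real.exp ((Astar * s + δ) / lam) * deriv T₁.F y := by
    have h1 := dF_lip T₂ y' y
    have h2 := hd y
    have h3 : deriv T₂.F y' ≤ deriv T₁.F y + (Astar * s + δ) := by
      have h4 : Astar * |y' - y| ≤ Astar * s := by rw [abs_sub_comm]; gcongr
      have := (abs_le.1 h1).2
      have := (abs_le.1 h2).1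
      linarith
    have h5 := Real.add_one_le_exp ((Astar * s + δ) / lam)
    have h6 : (Astar * s + δ) ≤ (Astar * s + δ) / lam * deriv T₁.F y := by
      rw [div_mul_eq_mul_div, le_div_iff₀ (by linarith)]
      have := T₁.expanding y
      gcongr
    nlinarith
  have h0 := hg0 (y' : Circle1)
  rw [Real.exp_add, ← mul_div_assoc, div_le_div_iff₀ hp1 hp2]
  calc g (y : Circle1) * deriv T₂.F y'
      ≤ (Real.exp (a * s) * g (y' : Circle1)) *
          (Real.exp ((Astar * s + δ) / lam) * deriv T₁.F y) := by gcongr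
    _ = _ := by ring

theorem transfer_logLip (hlam : 1 < lam) (hA : 0 < Astar) (T : CM lam Astar) {a : ℝ} (ha : 0 ≤ a)
    {g : Circle1 → ℝ} (hg0 : ∀ x, 0 ≤ g x) (hg : LogLip a g) :
    LogLip ((a + Astar / lam) / lam) (transfer T g) := by
  intro x y
  obtain ⟨X, Y, rfl, rfl, hXY⟩ := exists_lifts x y
  have := transfer_compare hlam hA T T (δ := 0) 0 (by simp) (by simp) rfl ha hg0 hg X Y _ rfl
  rw [← hXY]
  convert this using 3
  have : lam ≠ 0 := by linarith
  field_simp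
  ring

theorem transfer_DD (hlam : 1 < lam) (hA : 0 < Astar) (T : CM lam Astar) {a : ℝ} (ha : 0 ≤ a)
    {g : Circle1 → ℝ} (hg : DD a g) : DD ((a + Astar / lam) / lam) (transfer T g) :=
  ⟨transfer_density hlam T hg.1, transfer_logLip hlam hA T ha hg.1.2.2 hg.2⟩

theorem DD_mono {a b : ℝ} (hab : a ≤ b) {g : Circle1 → ℝ} (hg : DD a g) : DD b g := by
  refine ⟨hg.1, fun x y => (hg.2 x y).trans ?_⟩
  have := hg.1.2.2 y
  gcongr

theorem vol_univ : (volume : Measure Circle1).real univ = 1 := by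
  simp [Measure.real]

theorem integral_const_circle (s : ℝ) : ∫ _ : Circle1, s = s := by
  rw [integral_const, vol_univ, one_smul]

theorem DD_lower {a : ℝ} (ha : 0 ≤ a) {g : Circle1 → ℝ} (hg : DD a g) (y : Circle1) :
    Real.exp (-a) ≤ g y := by
  have h1 : ∫ x, g x ≤ ∫ _ : Circle1, Real.exp a * g y := by
    refine integral_mono hg.1.1 (integrable_const _) fun x => (hg.2 x y).trans ?_
    have := hg.1.2.2 y
    have := (dist_le_half x y)
    have : a * dist x y ≤ a := by nlinarith
    gcongr
  rw [hg.1.2.1, integral_const_circle] at h1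
  rw [Real.exp_neg, inv_le_iff_one_le_mul₀ (Real.exp_pos a)]
  linarith

/-- subtract a constant -/
theorem DD_split {a a' c : ℝ} (ha' : 0 ≤ a') (haa : a' < a)
    (hc0 : 0 < c) (hc1 : c < 1) (hc : c * (a * Real.exp a) ≤ Real.exp (-a) * (a - a'))
    {g : Circle1 → ℝ} (hg : DD a' g) : DD a (fun x => (1 - c)⁻¹ * (g x - c)) := by
  have ha : 0 < a := by linarith
  have hlow : ∀ y, Real.exp (-a) ≤ g y := DD_lower ha.le (DD_mono haa.le hg)
  have h1c : 0 < (1 - c)⁻¹ := by rw [inv_pos]; linarith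
  have hce : c ≤ Real.exp (-a) := by
    have h1 : a - a' ≤ a * Real.exp a := by
      have := Real.one_le_exp ha.le
      nlinarith
    have h2 : c * (a * Real.exp a) ≤ Real.exp (-a) * (a * Real.exp a) :=
      hc.trans (by gcongr)
    exact le_of_mul_le_mul_right h2 (by positivity)
  refine ⟨⟨?_, ?_, ?_⟩, ?_⟩
  · exact (hg.1.1.sub (integrable_const c)).const_mul _
  · rw [integral_const_mul, integral_sub hg.1.1 (integrable_const c), hg.1.2.1,
      integral_const_circle, inv_mul_cancel₀ (by linarith)]
  · intro x
    have := hlow x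
    exact mul_nonneg h1c.le (by linarith)
  · intro x y
    set d := dist x y with hd
    have hd0 : 0 ≤ d := dist_nonneg
    have hd1 : d ≤ 1 := (dist_le_half x y).trans (by norm_num)
    have h1 := hg.2 x y
    have h2 := hlow y
    -- e^{ad} - 1 ≤ a d e^{a}
    have h3 : Real.exp (a * d) - 1 ≤ a * Real.exp a * d := by
      have e1 := Real.add_one_le_exp (-(a * d))
      have e2 : Real.exp (-(a*d)) * Real.exp (a * d) = 1 := by rw [← Real.exp_add]; simp
      have e3 : Real.exp (a * d) ≤ Real.exp a := Real.exp_le_exp.2 (by nlinarith)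
      have e4 := Real.exp_pos (a * d)
      have : Real.exp (a * d) - 1 ≤ a * d * Real.exp (a * d) := by nlinarith
      have : a * d * Real.exp (a * d) ≤ a * d * Real.exp a := by gcongr
      linarith
    have h4 : (a - a') * d ≤ Real.exp (a * d) - Real.exp (a' * d) := by
      have e1 := Real.add_one_le_exp ((a - a') * d)
      have e2 : Real.exp (a * d) = Real.exp (a' * d) * Real.exp ((a - a') * d) := by
        rw [← Real.exp_add]; ring_nf
      have e3 : 1 ≤ Real.exp (a' * d) := Real.one_le_exp (by positivity)
      have e4 : 0 ≤ (a - a') * d := mul_nonneg (by linarith) hd0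
      rw [e2]
      nlinarith
    have h5 : c * (Real.exp (a * d) - 1) ≤ g y * (Real.exp (a * d) - Real.exp (a' * d)) := by
      calc c * (Real.exp (a * d) - 1) ≤ c * (a * Real.exp a * d) := by gcongr
        _ = c * (a * Real.exp a) * d := by ring
        _ ≤ Real.exp (-a) * (a - a') * d := by gcongr
        _ = Real.exp (-a) * ((a - a') * d) := by ring
        _ ≤ g y * ((a - a') * d) := by
            have : 0 ≤ (a - a') * d := mul_nonneg (by linarith) hd0
            gcongr
        _ ≤ _ := by
            have : 0 ≤ g y := hg.1.2.2 y
            gcongr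
    have h6 : g x - c ≤ Real.exp (a * d) * (g y - c) := by nlinarith
    calc (1 - c)⁻¹ * (g x - c) ≤ (1 - c)⁻¹ * (Real.exp (a * d) * (g y - c)) := by gcongr
      _ = _ := by ring

theorem contraction (hlam : 1 < lam) (hA : 0 < Astar) {a c : ℝ} (ha : 0 < a)
    (haa : (a + Astar / lam) / lam < a)
    (hc0 : 0 < c) (hc1 : c < 1)
    (hc : c * (a * Real.exp a) ≤ Real.exp (-a) * (a - (a + Astar / lam) / lam))
    (T : CM lam Astar) (m : ℕ) : ∀ g h : Circle1 → ℝ, DD a g → DD a h →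
    l1norm (fun x => (transfer T)^[m] g x - (transfer T)^[m] h x) ≤ 2 * (1 - c) ^ m := by
  induction m with
  | zero =>
    intro g h hg hh
    simpa using l1_density_le hg.1 hh.1
  | succ m ih =>
    intro g h hg hh
    have ha' : 0 ≤ (a + Astar / lam) / lam := by have : 0 < lam := by linarith
                                                 positivity
    have hg' := DD_split ha' haa hc0 hc1 hc (transfer_DD hlam hA T ha.le hg)
    have hh' := DD_split ha' haa hc0 hc1 hc (transfer_DD hlam hA T ha.le hh)
    have := ih _ _ hg' hh'
    have key : ∀ (m : ℕ) (u v u' v' : Circle1 → ℝ) (s : ℝ),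
        (∀ x, u x - v x = s * (u' x - v' x)) →
        ∀ x, (transfer T)^[m] u x - (transfer T)^[m] v x =
          s * ((transfer T)^[m] u' x - (transfer T)^[m] v' x) := by
      intro m
      induction m with
      | zero => intro u v u' v' s h x; simpa using h x
      | succ m ihm =>
        intro u v u' v' s h x
        simp only [Function.iterate_succ, Function.comp]
        apply ihm
        intro x
        have e1 := congrFun (transfer_sub hlam T u v) x
        have e2 := congrFun (transfer_sub hlam T u' v') x
        rw [← e1, ← e2]
        have e3 := transfer_lin hlam T (fun y => u' y - v' y) 0 s 0 x
        simp only [zero_mul, add_zero] at e3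
        rw [← e3]
        congr 1
        funext y; exact h y
    have k := key m (transfer T g) (transfer T h) _ _ (1 - c)
      (fun x => by
        show transfer T g x - transfer T h x =
          (1 - c) * ((1 - c)⁻¹ * (transfer T g x - c) - (1 - c)⁻¹ * (transfer T h x - c))
        have : 1 - c ≠ 0 := by linarith
        field_simp
        ring)
    simp only [Function.iterate_succ, Function.comp]
    simp only [k]
    unfold l1norm at this ⊢
    simp only [abs_mul, integral_const_mul]
    rw [abs_of_pos (by linarith : 0 < 1 - c), pow_succ]
    have h1c : 0 < 1 - c := by linarith
    calc _ ≤ (1 - c) * (2 * (1 - c) ^ m) := by gcongr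
      _ = _ := by ring

end PF

open MeasureTheory Filter Topology Set UniformConvergence

namespace PF

variable {lam Astar : ℝ}

/-- pointwise closeness -/
def Close (δ : ℝ) (T₁ T₂ : CM lam Astar) : Prop :=
  (∀ x, dist (T₁.toMap x) (T₂.toMap x) ≤ δ) ∧ ∀ x, |T₁.dmap x - T₂.dmap x| ≤ δ

theorem dmap_bdd (hA : 0 < Astar) (T : CM lam Astar) (x : Circle1) :
    |T.dmap x| ≤ |deriv T.F 0| + Astar := by
  unfold CM.dmap
  set y := ((AddCircle.equivIco 1 0 x : ℝ)) with hy
  have hy' : y ∈ Ico (0:ℝ) (0 + 1) := (AddCircle.equivIco 1 0 x).2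
  have h1 := dF_lip T y 0
  have h2 : |y - 0| ≤ 1 := by
    rw [abs_le]; constructor <;> linarith [hy'.1, hy'.2]
  have h3 : Astar * |y - 0| ≤ Astar := by nlinarith
  have h4 := abs_sub_abs_le_abs_sub (deriv T.F y) (deriv T.F 0)
  linarith

theorem close_of_dC1 (hA : 0 < Astar) {T₁ T₂ : CM lam Astar} {δ : ℝ} (h : dC1 T₁ T₂ ≤ δ) :
    Close δ T₁ T₂ := by
  have b1 : BddAbove (range fun x : Circle1 => dist (T₁.toMap x) (T₂.toMap x)) :=
    ⟨1 / 2, by rintro _ ⟨x, rfl⟩; exact dist_le_half _ _⟩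
  have b2 : BddAbove (range fun x : Circle1 => |T₁.dmap x - T₂.dmap x|) :=
    ⟨(|deriv T₁.F 0| + Astar) + (|deriv T₂.F 0| + Astar), by
      rintro _ ⟨x, rfl⟩
      exact (abs_sub _ _).trans (add_le_add (dmap_bdd hA T₁ x) (dmap_bdd hA T₂ x))⟩
  have p1 : 0 ≤ ⨆ x : Circle1, dist (T₁.toMap x) (T₂.toMap x) :=
    Real.iSup_nonneg fun _ => dist_nonneg
  have p2 : 0 ≤ ⨆ x : Circle1, |T₁.dmap x - T₂.dmap x| := Real.iSup_nonneg fun _ => abs_nonneg _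
  unfold dC1 at h
  exact ⟨fun x => (le_ciSup b1 x).trans (by linarith), fun x => (le_ciSup b2 x).trans (by linarith)⟩

theorem Close.symm {T₁ T₂ : CM lam Astar} {δ : ℝ} (h : Close δ T₁ T₂) : Close δ T₂ T₁ :=
  ⟨fun x => by rw [dist_comm]; exact h.1 x, fun x => by rw [abs_sub_comm]; exact h.2 x⟩

theorem Close.trans {T₁ T₂ T₃ : CM lam Astar} {δ δ' : ℝ} (h : Close δ T₁ T₂) (h' : Close δ' T₂ T₃) :
    Close (δ + δ') T₁ T₃ :=
  ⟨fun x => (dist_triangle _ _ _).trans (add_le_add (h.1 x) (h'.1 x)),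
   fun x => (abs_sub_le _ _ _).trans (add_le_add (h.2 x) (h'.2 x))⟩

theorem Close.mono {T₁ T₂ : CM lam Astar} {δ δ' : ℝ} (h : Close δ T₁ T₂) (hd : δ ≤ δ') :
    Close δ' T₁ T₂ := ⟨fun x => (h.1 x).trans hd, fun x => (h.2 x).trans hd⟩

theorem close_lift {T₁ T₂ : CM lam Astar} {δ : ℝ} (h : Close δ T₁ T₂) (hδ : δ < 1 / 2) :
    ∃ p : ℤ, (∀ x, |T₁.F x - T₂.F x - p| ≤ δ) ∧ (∀ x, |deriv T₁.F x - deriv T₂.F x| ≤ δ) ∧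
      T₁.deg = T₂.deg := by
  set D : ℝ → ℝ := fun x => T₁.F x - T₂.F x with hD
  have hr : ∀ x, |D x - round (D x)| ≤ δ := by
    intro x
    have := h.1 (x : Circle1)
    rw [toMap_coe, toMap_coe, dist_coe] at this
    exact this
  have hcont : Continuous D := (F_diff T₁).continuous.sub (F_diff T₂).continuous
  have hp : ∀ x, |D x - round (D 0)| ≤ δ := by
    intro x
    by_contra hx
    push Not at hx
    have hx2 : 1 / 2 ≤ |D x - round (D 0)| := by
      by_contra h3
      push Not at h3
      have : round (D x) = round (D 0) := by
        have h1 := abs_lt.1 (lt_of_le_of_lt (hr x) hδ)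
        have h2 := abs_lt.1 h3
        have l1 : ((round (D x) : ℤ) : ℝ) < (round (D 0) : ℤ) + 1 := by linarith [h1.1, h2.2]
        have l2 : ((round (D 0) : ℤ) : ℝ) < (round (D x) : ℤ) + 1 := by linarith [h1.2, h2.1]
        have l1' : round (D x) < round (D 0) + 1 := by exact_mod_cast l1
        have l2' : round (D 0) < round (D x) + 1 := by exact_mod_cast l2
        omega
      have h4 := hr x
      rw [this] at h4
      linarith
    have hc2 : Continuous fun x => |D x - round (D 0)| := (hcont.sub continuous_const).abs
    obtain ⟨y, hy⟩ := mem_range_of_exists_le_of_exists_ge hc2 (c := 1 / 2)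
      ⟨0, (hr 0).trans hδ.le⟩ ⟨x, hx2⟩
    simp only at hy
    have h5 := abs_lt.1 (lt_of_le_of_lt (hr y) hδ)
    rcases abs_eq (by norm_num : (0:ℝ) ≤ 1/2) |>.1 hy with h6 | h6
    · have l1 : ((round (D y) : ℤ) : ℝ) < (round (D 0) : ℤ) + 1 := by linarith [h5.1]
      have l2 : ((round (D 0) : ℤ) : ℝ) < (round (D y) : ℤ) := by linarith [h5.2]
      have l1' : round (D y) < round (D 0) + 1 := by exact_mod_cast l1
      have l2' : round (D 0) < round (D y) := by exact_mod_cast l2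
      omega
    · have l1 : ((round (D y) : ℤ) : ℝ) < (round (D 0) : ℤ) := by linarith [h5.1]
      have l2 : ((round (D 0) : ℤ) : ℝ) < (round (D y) : ℤ) + 1 := by linarith [h5.2]
      have l1' : round (D y) < round (D 0) := by exact_mod_cast l1
      have l2' : round (D 0) < round (D y) + 1 := by exact_mod_cast l2
      omega
  refine ⟨round (D 0), hp, fun x => ?_, ?_⟩
  · have := h.2 (x : Circle1)
    rwa [dmap_coe, dmap_coe] at this
  · have h0 := abs_lt.1 (lt_of_le_of_lt (hp 0) hδ)
    have h1 := abs_lt.1 (lt_of_le_of_lt (hp (0 + 1)) hδ)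
    simp only [hD, T₁.lift_add_one, T₂.lift_add_one] at h0 h1
    have l1 : (T₁.deg : ℝ) < T₂.deg + 1 := by linarith [h0.1, h1.2]
    have l2 : (T₂.deg : ℝ) < T₁.deg + 1 := by linarith [h0.2, h1.1]
    have l1' : T₁.deg < T₂.deg + 1 := by exact_mod_cast l1
    have l2' : T₂.deg < T₁.deg + 1 := by exact_mod_cast l2
    omega

theorem perturb_le (hlam : 1 < lam) (hA : 0 < Astar) {T₁ T₂ : CM lam Astar} {δ : ℝ}
    (h : Close δ T₁ T₂) (hδ : δ < 1 / 2) {a : ℝ} (ha : 0 ≤ a) {g : Circle1 → ℝ} (hg : DD a g)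
    (x : Circle1) : transfer T₁ g x ≤ 
      Real.exp ((a / lam + (Astar / lam + 1) / lam) * δ) * transfer T₂ g x := by
  obtain ⟨p, h1, h2, h3⟩ := close_lift h hδ
  obtain ⟨X, rfl⟩ := QuotientAddGroup.mk_surjective x
  have := transfer_compare hlam hA T₁ T₂ p h1 h2 h3 ha hg.1.2.2 hg.2 X X _ rfl
  convert this using 3
  simp
  ring

theorem perturb (hlam : 1 < lam) (hA : 0 < Astar) {a : ℝ} (ha : 0 ≤ a) :
    ∃ K : ℝ, 0 < K ∧ ∀ (T₁ T₂ : CM lam Astar) (δ : ℝ), Close δ T₁ T₂ → ∀ g, DD a g →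
      l1norm (fun x => transfer T₁ g x - transfer T₂ g x) ≤ K * δ := by
  set κ := a / lam + (Astar / lam + 1) / lam with hκ
  have hl0 : 0 < lam := by linarith
  have hκ0 : 0 < κ := by positivity
  refine ⟨2 * κ * Real.exp κ + 4, by positivity, fun T₁ T₂ δ h g hg => ?_⟩
  have hδ0 : 0 ≤ δ := dist_nonneg.trans (h.1 0)
  have hd1 := transfer_density hlam T₁ hg.1
  have hd2 := transfer_density hlam T₂ hg.1
  by_cases hδ : δ < 1 / 2
  · have hexp : Real.exp (κ * δ) - 1 ≤ κ * Real.exp κ * δ := by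
      have e1 := Real.add_one_le_exp (-(κ * δ))
      have e2 : Real.exp (-(κ*δ)) * Real.exp (κ * δ) = 1 := by rw [← Real.exp_add]; simp
      have e3 : Real.exp (κ * δ) ≤ Real.exp κ := Real.exp_le_exp.2 (by nlinarith)
      have e4 := Real.exp_pos (κ * δ)
      have : Real.exp (κ * δ) - 1 ≤ κ * δ * Real.exp (κ * δ) := by nlinarith
      have : κ * δ * Real.exp (κ * δ) ≤ κ * δ * Real.exp κ := by gcongr
      linarith
    have hpt : ∀ x, |transfer T₁ g x - transfer T₂ g x| ≤
        κ * Real.exp κ * δ * (transfer T₁ g x + transfer T₂ g x) := by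
      intro x
      have q1 := perturb_le hlam hA h hδ ha hg x
      have q2 := perturb_le hlam hA h.symm hδ ha hg x
      rw [← hκ] at q1 q2
      have n1 := hd1.2.2 x
      have n2 := hd2.2.2 x
      have m1 := mul_le_mul_of_nonneg_right hexp n1
      have m2 := mul_le_mul_of_nonneg_right hexp n2
      have n3 : 0 ≤ κ * Real.exp κ * δ := by positivity
      have m3 := mul_nonneg n3 n1
      have m4 := mul_nonneg n3 n2
      rw [abs_le]; constructor <;> nlinarith
    have : l1norm (fun x => transfer T₁ g x - transfer T₂ g x) ≤ κ * Real.exp κ * δ * 2 := by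
      unfold l1norm
      have e : κ * Real.exp κ * δ * 2 =
          ∫ x, κ * Real.exp κ * δ * (transfer T₁ g x + transfer T₂ g x) := by
        rw [integral_const_mul, integral_add hd1.1 hd2.1, hd1.2.1, hd2.2.1]; norm_num
      rw [e]
      exact integral_mono (hd1.1.sub hd2.1).abs ((hd1.1.add hd2.1).const_mul _) hpt
    nlinarith
  · push Not at hδ
    have := l1_density_le hd1 hd2
    have : 0 ≤ 2 * κ * Real.exp κ * δ := by positivity
    linarith

theorem smooth {f u : Circle1 → ℝ} (hf : IsProbDensity f) {K ε : ℝ} (hK : 0 ≤ K) (hε : 0 < ε)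
    (hu : ∀ x y, u x ≤ u y + K * dist x y) (hl : l1norm (fun x => u x - f x) ≤ ε) :
    ∃ g, DD (K / ε) g ∧ l1norm (fun x => g x - f x) ≤ 4 * ε := by
  have hucont : Continuous u := by
    have : LipschitzWith (Real.toNNReal K) u := by
      apply LipschitzWith.of_le_add_mul
      intro x y
      rw [Real.coe_toNNReal _ hK]; exact hu x y
    exact this.continuous
  set v : Circle1 → ℝ := fun x => max (u x) 0 + ε with hv
  have hvcont : Continuous v := (hucont.max continuous_const).add continuous_const
  have hui : Integrable u := hucont.integrable_of_hasCompactSupport (HasCompactSupport.of_compactSpace _)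
  have hvi : Integrable v := hvcont.integrable_of_hasCompactSupport (HasCompactSupport.of_compactSpace _)
  have hvε : ∀ x, ε ≤ v x := fun x => by simp only [hv]; linarith [le_max_right (u x) 0]
  have hvl : ∀ x y, v x ≤ v y + K * dist x y := by
    intro x y
    simp only [hv]
    have h1 := hu x y
    have h2 : 0 ≤ K * dist x y := mul_nonneg hK dist_nonneg
    have : max (u x) 0 ≤ max (u y) 0 + K * dist x y :=
      max_le (by linarith [le_max_left (u y) 0]) (by linarith [le_max_right (u y) 0])
    linarith
  have hvf : l1norm (fun x => v x - f x) ≤ 2 * ε := by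
    have : l1norm (fun x => v x - f x) ≤ ∫ x, (|u x - f x| + ε) := by
      refine integral_mono (hvi.sub hf.1).abs ((hui.sub hf.1).abs.add (integrable_const ε)) fun x => ?_
      simp only [hv]
      have h0 := hf.2.2 x
      have h1 : |max (u x) 0 - f x| ≤ |u x - f x| := by
        have := abs_max_sub_max_le_abs (u x) (f x) 0
        rwa [max_eq_left h0] at this
      have h2 : max (u x) 0 + ε - f x = (max (u x) 0 - f x) + ε := by ring
      rw [h2]
      refine (abs_add_le _ _).trans ?_
      rw [abs_of_pos hε]; linarith
    have e := integral_add (hui.sub hf.1).abs (integrable_const (μ := (volume : Measure Circle1)) ε)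
    simp only [Pi.sub_apply] at e
    rw [e, integral_const_circle] at this
    unfold l1norm at hl this ⊢
    linarith
  set I := ∫ x, v x with hI
  have hI0 : 0 < I := by
    have : ∫ _ : Circle1, ε ≤ I := integral_mono (integrable_const _) hvi hvε
    rw [integral_const_circle] at this
    linarith
  have hI1 : |1 - I| ≤ 2 * ε := by
    have e : 1 - I = - ∫ x, (v x - f x) := by
      rw [integral_sub hvi hf.1, hf.2.1]; ring
    rw [e, abs_neg]
    exact (abs_integral_le_integral_abs).trans hvf
  refine ⟨fun x => I⁻¹ * v x, ⟨⟨hvi.const_mul _, ?_, ?_⟩, ?_⟩, ?_⟩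
  · rw [integral_const_mul, inv_mul_cancel₀ hI0.ne']
  · intro x; have := hvε x; have : 0 ≤ v x := by linarith
    positivity
  · intro x y
    have h1 := hvl x y
    have h2 := hvε y
    have h3 := Real.add_one_le_exp (K / ε * dist x y)
    have h4 : K * dist x y ≤ K / ε * dist x y * v y := by
      have e : K * dist x y = K / ε * dist x y * ε := by field_simp
      have : 0 ≤ K / ε * dist x y := by positivity
      calc K * dist x y = K / ε * dist x y * ε := e
        _ ≤ _ := by gcongr
    have h5 : v x ≤ Real.exp (K / ε * dist x y) * v y := by nlinarith
    calc I⁻¹ * v x ≤ I⁻¹ * (Real.exp (K / ε * dist x y) * v y) := by gcongr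
      _ = _ := by ring
  · have t := l1_tri (hvi.const_mul I⁻¹) hvi hf.1
    have e : l1norm (fun x => I⁻¹ * v x - v x) = |1 - I| := by
      unfold l1norm
      have : ∀ x, |I⁻¹ * v x - v x| = |I⁻¹ - 1| * v x := by
        intro x
        have h2 := hvε x
        rw [← sub_one_mul, abs_mul, abs_of_nonneg (by linarith : 0 ≤ v x)]
      simp only [this]
      rw [integral_const_mul, ← hI]
      have hh : |I⁻¹ - 1| * I = |(I⁻¹ - 1) * I| := by rw [abs_mul, abs_of_pos hI0]
      rw [hh, sub_mul, inv_mul_cancel₀ hI0.ne', one_mul]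
    rw [e] at t
    linarith

/-- inf-convolution -/
theorem infconv {f : Circle1 → ℝ} {M K : ℝ} (hM : ∀ x, -M ≤ f x) (hK : 0 ≤ K) :
    ∃ u : Circle1 → ℝ, (∀ x y, u x ≤ u y + K * dist x y) ∧ (∀ x, u x ≤ f x) ∧
      ∀ x s, (∀ y, s ≤ f y + K * dist x y) → s ≤ u x := by
  have hb : ∀ x, BddBelow (range fun y => f y + K * dist x y) := by
    intro x
    refine ⟨-M, ?_⟩
    rintro _ ⟨y, rfl⟩
    have := hM y
    have : 0 ≤ K * dist x y := mul_nonneg hK dist_nonneg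
    simp only; linarith
  refine ⟨fun x => ⨅ y, f y + K * dist x y, ?_, ?_, ?_⟩
  · intro x y
    rw [← sub_le_iff_le_add]
    refine le_ciInf fun w => ?_
    have h1 := ciInf_le (hb x) w
    have h2 := mul_le_mul_of_nonneg_left (dist_triangle x y w) hK
    linarith
  · intro x
    have := ciInf_le (hb x) x
    simpa using this
  · intro x s h
    exact le_ciInf h

theorem approx_density {f : Circle1 → ℝ} (hf : IsProbDensity f) {ε : ℝ} (hε : 0 < ε) :
    ∃ a : ℝ, 0 ≤ a ∧ ∃ g, DD a g ∧ l1norm (fun x => g x - f x) ≤ ε := by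
  obtain ⟨w, -, hw, hwc, hwi⟩ := hf.1.exists_hasCompactSupport_integral_sub_le (by positivity : 0 < ε / 8)
  have huc : UniformContinuous w := CompactSpace.uniformContinuous_of_continuous hwc
  obtain ⟨δ, hδ, hδw⟩ := Metric.uniformContinuous_iff.1 huc (ε / 8) (by positivity)
  obtain ⟨M, hM⟩ := (isCompact_range hwc).isBounded.exists_norm_le
  have hM' : ∀ x, |w x| ≤ M := fun x => hM _ ⟨x, rfl⟩
  have hM0 : 0 ≤ M := (abs_nonneg _).trans (hM' 0)
  obtain ⟨u, h1, h2, h3⟩ := infconv (f := w) (M := M) (K := 2 * M / δ)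
    (fun x => (abs_le.1 (hM' x)).1) (by positivity)
  have h4 : ∀ x, |u x - w x| ≤ ε / 8 := by
    intro x
    have : w x - ε / 8 ≤ u x := by
      apply h3
      intro y
      by_cases hxy : dist x y < δ
      · have := hδw hxy
        rw [Real.dist_eq] at this
        have := (abs_lt.1 this).2
        have : 0 ≤ 2 * M / δ * dist x y := by positivity
        linarith
      · push Not at hxy
        have e : 2 * M ≤ 2 * M / δ * dist x y := by
          rw [div_mul_eq_mul_div, le_div_iff₀ hδ]; gcongr
        have := (abs_le.1 (hM' x)).2
        have := (abs_le.1 (hM' y)).1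
        linarith
    rw [abs_le]; constructor <;> linarith [h2 x]
  have hucont : Continuous u := by
    have : LipschitzWith (Real.toNNReal (2 * M / δ)) u := by
      apply LipschitzWith.of_le_add_mul
      intro x y
      rw [Real.coe_toNNReal _ (by positivity)]; exact h1 x y
    exact this.continuous
  have hui : Integrable u := hucont.integrable_of_hasCompactSupport (HasCompactSupport.of_compactSpace _)
  have h5 : l1norm (fun x => u x - w x) ≤ ε / 8 := by
    have : l1norm (fun x => u x - w x) ≤ ∫ _ : Circle1, ε / 8 :=
      integral_mono (hui.sub hwi).abs (integrable_const _) h4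
    rwa [integral_const_circle] at this
  have h6 : l1norm (fun x => w x - f x) ≤ ε / 8 := by
    rw [l1_comm]; exact hw
  have h7 := l1_tri hui hwi hf.1
  obtain ⟨g, hg, hgl⟩ := smooth hf (K := 2 * M / δ) (ε := ε / 4) (by positivity) (by positivity) h1 (by linarith)
  exact ⟨_, by positivity, g, hg, by linarith⟩

end PF

open MeasureTheory Filter Topology Set UniformConvergence

namespace PF

variable {lam Astar : ℝ}

theorem arcCoord_mem (z x : Circle1) : zrep z < arcCoord z x ∧ arcCoord z x ≤ zrep z + 1 :=
  (AddCircle.equivIoc 1 (zrep z) x).2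

theorem arcCoord_coe (z x : Circle1) : ((arcCoord z x : ℝ) : Circle1) = x :=
  (AddCircle.equivIoc 1 (zrep z)).symm_apply_apply x

theorem zrep_coe (z : Circle1) : ((zrep z : ℝ) : Circle1) = z :=
  (AddCircle.equivIco 1 0).symm_apply_apply z

theorem arcDist_le_one (z x y : Circle1) : arcDist z x y ≤ 1 := by
  have h1 := arcCoord_mem z x
  have h2 := arcCoord_mem z y
  unfold arcDist
  rw [abs_le]; constructor <;> linarith [h1.1, h1.2, h2.1, h2.2]

theorem arcDist_le (z x y : Circle1) (h : dist x y < dist x z) : arcDist z x y ≤ dist x y := by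
  have h1 := arcCoord_mem z x
  have h2 := arcCoord_mem z y
  have hxy : dist x y = |arcCoord z x - arcCoord z y - round (arcCoord z x - arcCoord z y)| := by
    rw [← dist_coe, arcCoord_coe, arcCoord_coe]
  have hz1 : dist x z ≤ |arcCoord z x - zrep z| := by
    have := dist_coe_le (arcCoord z x) (zrep z)
    rwa [arcCoord_coe, zrep_coe] at this
  have hz2 : dist x z ≤ |arcCoord z x - (zrep z + 1)| := by
    have := dist_coe_le (arcCoord z x) (zrep z + 1)
    have e : ((zrep z + 1 : ℝ) : Circle1) = z := by
      conv_rhs => rw [← zrep_coe z]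
      rw [coe_eq_iff]; exact ⟨1, by push_cast; ring⟩
    rwa [arcCoord_coe, e] at this
  unfold arcDist
  rw [hxy] at h ⊢
  generalize arcCoord z x = p at *
  generalize arcCoord z y = q at *
  generalize zrep z = w at *
  rw [abs_of_nonneg (by linarith [h1.1])] at hz1
  rw [abs_of_nonpos (by linarith [h1.2])] at hz2
  have hr := abs_le.1 (abs_sub_round (p - q))
  have hr1 : round (p - q) < 2 := by
    have : (round (p-q) : ℝ) < 2 := by linarith [h1.2, h2.1]
    exact_mod_cast this
  have hr2 : -2 < round (p - q) := by
    have : (-2:ℝ) < (round (p-q) : ℝ) := by linarith [h1.1, h2.2]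
    exact_mod_cast this
  obtain h0 | h0 | h0 : round (p - q) = -1 ∨ round (p - q) = 0 ∨ round (p - q) = 1 := by omega
  · exfalso
    rw [h0] at h
    push_cast at h
    have := le_abs_self (p - q - -1)
    linarith [h2.2]
  · rw [h0]; simp
  · exfalso
    rw [h0] at h
    push_cast at h
    have := neg_abs_le (p - q - 1)
    linarith [h2.1]

theorem ne_ae (z : Circle1) : ∀ᵐ x : Circle1, x ≠ z := by
  have : volume ({z} : Set Circle1) = 0 := by
    have := AddCircle.volume_closedBall (T := (1:ℝ)) (x := z) 0
    simpa using this
  rw [ae_iff]; simpa using this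

theorem rho_le {ρ : Circle1 → ℝ} {z : Circle1} {L : ℝ} (hρ : IsProbDensity ρ) (hL : 0 < L)
    (hl : LipOnArc z L ρ) (x : Circle1) (hx : x ≠ z) : ρ x ≤ 1 + L := by
  have h1 : ∀ᵐ y : Circle1, ρ x - L ≤ ρ y := by
    filter_upwards [ne_ae z] with y hy
    have h := (abs_le.1 (hl x y hx hy)).2
    have := mul_le_mul_of_nonneg_left (arcDist_le_one z x y) hL.le
    linarith
  have := integral_mono_ae (integrable_const (ρ x - L)) hρ.1 h1
  rw [integral_const_circle, hρ.2.1] at this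
  linarith

theorem approx_rho {ρ : Circle1 → ℝ} {z : Circle1} {L : ℝ} (hρ : IsProbDensity ρ) (hL : 0 < L)
    (hl : LipOnArc z L ρ) {r : ℝ} (hr : 0 < r) (hr1 : r ≤ 1) :
    ∃ g, DD (1 / (2 * r ^ 2)) g ∧ l1norm (fun x => g x - ρ x) ≤ 8 * (1 + L) * r := by
  classical
  set f := Function.update ρ z 0 with hf
  set M := 1 + L with hM
  have hM0 : 0 < M := by positivity
  have hfn : ∀ x, x ≠ z → f x = ρ x := fun x hx => by rw [hf, Function.update_of_ne hx]
  have hfz : f z = 0 := by rw [hf, Function.update_self]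
  have hf0 : ∀ x, 0 ≤ f x := by
    intro x
    by_cases hx : x = z
    · rw [hx, hfz]
    · rw [hfn x hx]; exact hρ.2.2 x
  have hfM : ∀ x, f x ≤ M := by
    intro x
    by_cases hx : x = z
    · rw [hx, hfz]; exact hM0.le
    · rw [hfn x hx]; exact rho_le hρ hL hl x hx
  obtain ⟨u, h1, h2, h3⟩ := infconv (f := f) (M := 0) (K := M / r)
    (fun x => by simpa using hf0 x) (by positivity)
  have hu0 : ∀ x, 0 ≤ u x := fun x => h3 x 0 fun y => by
    have := hf0 y
    positivity
  have hueq : ∀ x, r < dist x z → u x = f x := by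
    intro x hx
    apply le_antisymm (h2 x)
    apply h3
    intro y
    by_cases hxy : r ≤ dist x y
    · have e : M ≤ M / r * dist x y := by
        rw [div_mul_eq_mul_div, le_div_iff₀ hr]; gcongr
      linarith [hfM x, hf0 y]
    · push Not at hxy
      have hyz : y ≠ z := by rintro rfl; linarith
      have hxz : x ≠ z := by rintro rfl; rw [dist_self] at hx; linarith
      rw [hfn x hxz, hfn y hyz]
      have a1 := arcDist_le z x y (by linarith)
      have a2 := (abs_le.1 (hl x y hxz hyz)).2
      have a3 : L * arcDist z x y ≤ M / r * dist x y := by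
        apply mul_le_mul _ a1 (abs_nonneg _) (by positivity)
        rw [le_div_iff₀ hr]
        nlinarith
      linarith
  have hucont : Continuous u := by
    have : LipschitzWith (Real.toNNReal (M / r)) u := by
      apply LipschitzWith.of_le_add_mul
      intro x y
      rw [Real.coe_toNNReal _ (by positivity)]; exact h1 x y
    exact this.continuous
  have hui : Integrable u := hucont.integrable_of_hasCompactSupport (HasCompactSupport.of_compactSpace _)
  have hl1 : l1norm (fun x => u x - ρ x) ≤ 2 * M * r := by
    have hb : ∀ᵐ x : Circle1, |u x - ρ x| ≤ (Metric.closedBall z r).indicator (fun _ => M) x := by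
      filter_upwards [ne_ae z] with x hx
      rw [← hfn x hx]
      by_cases hxr : x ∈ Metric.closedBall z r
      · rw [indicator_of_mem hxr, abs_le]
        constructor <;> linarith [hf0 x, hfM x, h2 x, hu0 x]
      · rw [indicator_of_notMem hxr]
        rw [Metric.mem_closedBall, not_le] at hxr
        rw [hueq x hxr]; simp
    have hms : MeasurableSet (Metric.closedBall z r) := Metric.isClosed_closedBall.measurableSet
    have := integral_mono_ae (hui.sub hρ.1).abs
      ((integrable_const M).indicator hms) hb
    rw [integral_indicator_const _ hms, measureReal_def, AddCircle.volume_closedBall,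
      ENNReal.toReal_ofReal (by positivity), smul_eq_mul] at this
    calc _ ≤ _ := this
      _ ≤ 2 * r * M := by gcongr; exact min_le_right _ _
      _ = _ := by ring
  obtain ⟨g, hg, hgl⟩ := smooth hρ (K := M / r) (ε := 2 * M * r) (by positivity) (by positivity) h1 hl1
  refine ⟨g, ?_, by linarith⟩
  have e : M / r / (2 * M * r) = 1 / (2 * r ^ 2) := by field_simp
  rwa [← e]

/-- the fixed point -/
noncomputable def astar (lam Astar : ℝ) : ℝ := Astar / (lam * (lam - 1))

theorem astar_fix (hlam : 1 < lam) (t : ℝ) :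
    (t + astar lam Astar + Astar / lam) / lam = t / lam + astar lam Astar := by
  unfold astar
  have : lam - 1 ≠ 0 := by linarith
  have : lam ≠ 0 := by linarith
  field_simp
  ring

theorem astar_pos (hlam : 1 < lam) (hA : 0 < Astar) : 0 < astar lam Astar := by
  unfold astar
  have : 0 < lam - 1 := by linarith
  positivity

theorem step_DD (hlam : 1 < lam) (hA : 0 < Astar) (T : CM lam Astar) {t : ℝ} (ht : 0 ≤ t)
    {g : Circle1 → ℝ} (hg : DD (t + astar lam Astar) g) :
    DD (t / lam + astar lam Astar) (transfer T g) := by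
  rw [← astar_fix hlam]
  exact transfer_DD hlam hA T (by linarith [astar_pos hlam hA]) hg

theorem iter_DD (hlam : 1 < lam) (hA : 0 < Astar) (T : CM lam Astar) {t : ℝ} (ht : 0 ≤ t)
    {g : Circle1 → ℝ} (hg : DD (t + astar lam Astar) g) (j : ℕ) :
    DD (t / lam ^ j + astar lam Astar) ((transfer T)^[j] g) := by
  induction j with
  | zero => simpa using hg
  | succ j ih =>
    rw [Function.iterate_succ_apply', pow_succ, ← div_div]
    exact step_DD hlam hA T (by positivity) ih

theorem arr_DD (hlam : 1 < lam) (hA : 0 < Astar) (Tarr : ℕ → ℕ → CM lam Astar) (n : ℕ) {t : ℝ}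
    (ht : 0 ≤ t) {g : Circle1 → ℝ} (hg : DD (t + astar lam Astar) g) (j : ℕ) :
    DD (t / lam ^ j + astar lam Astar) (arrTransfer Tarr n j g) := by
  induction j with
  | zero => simpa [arrTransfer] using hg
  | succ j ih =>
    rw [arrTransfer, pow_succ, ← div_div]
    exact step_DD hlam hA _ (by positivity) ih

theorem arr_density (hlam : 1 < lam) (Tarr : ℕ → ℕ → CM lam Astar) (n : ℕ)
    {g : Circle1 → ℝ} (hg : IsProbDensity g) (j : ℕ) :
    IsProbDensity (arrTransfer Tarr n j g) := by
  induction j with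
  | zero => exact hg
  | succ j ih => exact transfer_density hlam _ ih

theorem arr_l1 (hlam : 1 < lam) (Tarr : ℕ → ℕ → CM lam Astar) (n : ℕ)
    {g h : Circle1 → ℝ} (hg : IsProbDensity g) (hh : IsProbDensity h) (j : ℕ) :
    l1norm (fun x => arrTransfer Tarr n j g x - arrTransfer Tarr n j h x)
      ≤ l1norm (fun x => g x - h x) := by
  induction j with
  | zero => exact le_rfl
  | succ j ih =>
    exact (l1_transfer_sub hlam _ (arr_density hlam Tarr n hg j).1
      (arr_density hlam Tarr n hh j).1).trans ih

/-- working cone parameter -/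
noncomputable def aw (lam Astar : ℝ) : ℝ := lam + astar lam Astar

theorem aw_DD (hlam : 1 < lam) (hA : 0 < Astar) (T : CM lam Astar)
    {g : Circle1 → ℝ} (hg : DD (aw lam Astar) g) : DD (aw lam Astar) (transfer T g) := by
  have := step_DD hlam hA T (by linarith) hg
  refine DD_mono ?_ this
  unfold aw
  rw [div_self (by linarith)]
  linarith

theorem contr (hlam : 1 < lam) (hA : 0 < Astar) : ∃ c : ℝ, 0 < c ∧ c < 1 ∧
    ∀ (T : CM lam Astar) (m : ℕ) (g h : Circle1 → ℝ), DD (aw lam Astar) g → DD (aw lam Astar) h →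
      l1norm (fun x => (transfer T)^[m] g x - (transfer T)^[m] h x) ≤ 2 * (1 - c) ^ m := by
  have hp := astar_pos hlam hA
  set a := aw lam Astar with ha
  have ha0 : 0 < a := by rw [ha, aw]; linarith
  have haa : (a + Astar / lam) / lam = 1 + astar lam Astar := by
    rw [ha, aw, astar_fix hlam, div_self (by linarith)]
  have hlt : (a + Astar / lam) / lam < a := by rw [haa, ha, aw]; linarith
  have hq : 0 < Real.exp (-a) * (a - (a + Astar / lam) / lam) / (a * Real.exp a) := by
    have : 0 < a - (a + Astar / lam) / lam := by linarith
    positivity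
  refine ⟨min (1/2) (Real.exp (-a) * (a - (a + Astar / lam) / lam) / (a * Real.exp a)),
    lt_min (by norm_num) hq, lt_of_le_of_lt (min_le_left _ _) (by norm_num), ?_⟩
  intro T m g h hg hh
  refine contraction hlam hA ha0 hlt ?_ ?_ ?_ T m g h hg hh
  · first | exact (lt_min (by norm_num) hq).le | exact (lt_min (by norm_num) hq)
  · exact (lt_of_le_of_lt (min_le_left _ _) (by norm_num))
  · rw [← le_div_iff₀ (by positivity)]
    exact min_le_right _ _

theorem iter_density (hlam : 1 < lam) (T : CM lam Astar)
    {g : Circle1 → ℝ} (hg : IsProbDensity g) (j : ℕ) : IsProbDensity ((transfer T)^[j] g) := by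
  induction j with
  | zero => exact hg
  | succ j ih => rw [Function.iterate_succ_apply']; exact transfer_density hlam _ ih

theorem iter_srb (hlam : 1 < lam) (T : CM lam Astar) {g r : Circle1 → ℝ} (hg : IsProbDensity g)
    (hr : IsSRBDensity T r) (j : ℕ) :
    l1norm (fun x => (transfer T)^[j] g x - r x) ≤ l1norm (fun x => g x - r x) := by
  induction j with
  | zero => exact le_rfl
  | succ j ih =>
    rw [Function.iterate_succ_apply']
    exact (l1_srb hlam T hr (iter_density hlam T hg j).1).trans ih

theorem srb_conv (hlam : 1 < lam) (hA : 0 < Astar) {c : ℝ}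
    (hc : ∀ (T : CM lam Astar) (m : ℕ) (g h : Circle1 → ℝ), DD (aw lam Astar) g →
      DD (aw lam Astar) h →
      l1norm (fun x => (transfer T)^[m] g x - (transfer T)^[m] h x) ≤ 2 * (1 - c) ^ m)
    (T : CM lam Astar) {h r : Circle1 → ℝ} (hh : DD (aw lam Astar) h) (hr : IsSRBDensity T r)
    (m : ℕ) : l1norm (fun x => (transfer T)^[m] h x - r x) ≤ 2 * (1 - c) ^ m := by
  apply le_of_forall_pos_le_add
  intro ε hε
  obtain ⟨a, ha, g, hg, hgl⟩ := approx_density hr.1 hε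
  have hg' : DD (a + astar lam Astar) g := DD_mono (by linarith [astar_pos hlam hA]) hg
  obtain ⟨N, hN⟩ := pow_unbounded_of_one_lt a hlam
  have hgN := iter_DD hlam hA T ha hg' N
  have hgN' : DD (aw lam Astar) ((transfer T)^[N] g) := by
    refine DD_mono ?_ hgN
    unfold aw
    have : a / lam ^ N ≤ 1 := by
      rw [div_le_one (by positivity)]; exact hN.le
    linarith
  have h1 := hc T m h _ hh hgN'
  have h2 := iter_srb hlam T (iter_density hlam T hg.1 N) hr m
  have h3 := iter_srb hlam T hg.1 hr N
  have h4 := l1_tri (iter_density hlam T hh.1 m).1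
    (iter_density hlam T (iter_density hlam T hg.1 N) m).1 hr.1.1
  linarith

theorem telescope (hlam : 1 < lam) (hA : 0 < Astar) {K δ : ℝ}
    (hK : ∀ T₁ T₂ : CM lam Astar, ∀ δ, Close δ T₁ T₂ → ∀ g, DD (aw lam Astar) g →
      l1norm (fun x => transfer T₁ g x - transfer T₂ g x) ≤ K * δ)
    (Tarr : ℕ → ℕ → CM lam Astar) (n : ℕ) (T : CM lam Astar) {g : Circle1 → ℝ} (j0 m : ℕ)
    (hcl : ∀ i, i ≤ m → Close δ (Tarr n (j0 + i)) T)
    (hg : DD (aw lam Astar) (arrTransfer Tarr n j0 g)) :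
    DD (aw lam Astar) (arrTransfer Tarr n (j0 + m) g) ∧
    l1norm (fun x => arrTransfer Tarr n (j0 + m) g x
      - (transfer T)^[m] (arrTransfer Tarr n j0 g) x) ≤ m * (K * δ) := by
  induction m with
  | zero =>
    refine ⟨hg, ?_⟩
    simp [l1norm]
  | succ m ih =>
    obtain ⟨ih1, ih2⟩ := ih fun i hi => hcl i (by omega)
    refine ⟨aw_DD hlam hA _ ih1, ?_⟩
    rw [Function.iterate_succ_apply']
    have hd := iter_density hlam T hg.1 m
    have h1 := hK (Tarr n (j0 + (m+1))) T δ (hcl _ le_rfl) _ ih1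
    have h2 := l1_transfer_sub hlam T ih1.1.1 hd.1
    have h3 := l1_tri (transfer_density hlam (Tarr n (j0 + (m+1))) ih1.1).1
      (transfer_density hlam T ih1.1).1 (transfer_density hlam T hd).1
    push_cast
    change l1norm (fun x => transfer (Tarr n (j0 + (m+1))) (arrTransfer Tarr n (j0 + m) g) x - _) ≤ _
    linarith

end PF

open MeasureTheory Filter Topology Set UniformConvergence

namespace PF

variable {lam Astar : ℝ}

theorem close_arr (hA : 0 < Astar) {η : ℝ} (hη : η ∈ Set.Ioo (0 : ℝ) 1)
    {γ : ℝ → CM lam Astar} {Tarr : ℕ → ℕ → CM lam Astar} {H M : ℝ}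
    (hH : ∀ s ∈ Icc (0:ℝ) 1, ∀ t ∈ Icc (0:ℝ) 1, dC1 (γ s) (γ t) ≤ H * |s - t| ^ η)
    (hM : ∀ n : ℕ, 1 ≤ n → ∀ t ∈ Icc (0:ℝ) 1,
      (n : ℝ) ^ η * dC1 (Tarr n ⌊(n : ℝ) * t⌋₊) (γ t) ≤ M)
    {n j k m : ℕ} (hn : 1 ≤ n) (hj : j ≤ k) (hk : k ≤ n) (hm : k ≤ j + m) :
    Close ((2 * |M| + |H| * (1 + m)) * (n : ℝ) ^ (-η)) (Tarr n j) (Tarr n k) := by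
  have hn0 : (0:ℝ) < n := by exact_mod_cast hn
  have key : ∀ i : ℕ, i ≤ n → ((i:ℝ) / n) ∈ Icc (0:ℝ) 1 ∧
      dC1 (Tarr n i) (γ ((i:ℝ) / n)) ≤ |M| * (n:ℝ) ^ (-η) := by
    intro i hi
    have hmem : ((i:ℝ) / n) ∈ Icc (0:ℝ) 1 :=
      ⟨by positivity, by rw [div_le_one hn0]; exact_mod_cast hi⟩
    refine ⟨hmem, ?_⟩
    have h := hM n hn _ hmem
    rw [mul_div_cancel₀ _ hn0.ne', Nat.floor_natCast] at h
    rw [Real.rpow_neg hn0.le, ← div_eq_mul_inv, le_div_iff₀ (by positivity), mul_comm]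
    exact h.trans (le_abs_self _)
  obtain ⟨j1, j2⟩ := key j (hj.trans hk)
  obtain ⟨k1, k2⟩ := key k hk
  have h3 : dC1 (γ ((j:ℝ) / n)) (γ ((k:ℝ) / n)) ≤ |H| * (1 + m) * (n:ℝ) ^ (-η) := by
    have e : |(j:ℝ) / n - (k:ℝ) / n| ≤ (m:ℝ) / n := by
      rw [← sub_div, abs_div, abs_of_pos hn0]
      gcongr
      have a1 : (j:ℝ) ≤ k := by exact_mod_cast hj
      have a2 : (k:ℝ) ≤ j + m := by exact_mod_cast hm
      rw [abs_le]; constructor <;> linarith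
    have e2 : |(j:ℝ) / n - (k:ℝ) / n| ^ η ≤ (1 + m) * (n:ℝ) ^ (-η) := by
      calc |(j:ℝ) / n - (k:ℝ) / n| ^ η ≤ ((m:ℝ) / n) ^ η :=
            Real.rpow_le_rpow (abs_nonneg _) e hη.1.le
        _ = (m:ℝ) ^ η * (n:ℝ) ^ (-η) := by
            rw [Real.div_rpow (by positivity) hn0.le, Real.rpow_neg hn0.le, div_eq_mul_inv]
        _ ≤ _ := by
            gcongr
            calc (m:ℝ) ^ η ≤ (1 + m : ℝ) ^ η :=
                  Real.rpow_le_rpow (by positivity) (by linarith) hη.1.le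
              _ ≤ (1 + m : ℝ) ^ (1:ℝ) :=
                  Real.rpow_le_rpow_of_exponent_le (by linarith [(Nat.cast_nonneg m : (0:ℝ) ≤ m)]) hη.2.le
              _ = _ := Real.rpow_one _
    calc _ ≤ _ := hH _ j1 _ k1
      _ ≤ |H| * |(j:ℝ) / n - (k:ℝ) / n| ^ η := by gcongr; exact le_abs_self _
      _ ≤ |H| * ((1 + m) * (n:ℝ) ^ (-η)) := by gcongr
      _ = _ := by ring
  have := ((close_of_dC1 hA j2).trans (close_of_dC1 hA h3)).trans (close_of_dC1 hA k2).symm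
  exact this.mono (by linarith)

theorem main (hlam : 1 < lam) (hA : 0 < Astar)
    {η : ℝ} (hη : η ∈ Set.Ioo (0 : ℝ) 1)
    (γ : ℝ → CM lam Astar) (hγ : HolderCurve η γ)
    (Tarr : ℕ → ℕ → CM lam Astar) (hT : ArrayApprox η γ Tarr) :
    ∃ b : ℝ, 0 < b ∧
      ∀ η' : ℝ, η' < η → ∀ L : ℝ, 0 < L → ∃ C : ℝ, 0 < C ∧
        ∀ (ρ : Circle1 → ℝ) (z : Circle1), IsProbDensity ρ → LipOnArc z L ρ →
          ∀ n k : ℕ, 1 ≤ n → k ≤ n → b * Real.log n ≤ k →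
            ∀ ρhat : Circle1 → ℝ, IsSRBDensity (Tarr n k) ρhat →
              l1norm (fun x => arrTransfer Tarr n k ρ x - ρhat x) ≤ C * (n : ℝ) ^ (-η') := by
  obtain ⟨H, hH⟩ := hγ
  obtain ⟨M, hM⟩ := hT
  obtain ⟨c, hc0, hc1, hc⟩ := contr hlam hA
  have haw : 0 ≤ aw lam Astar := by
    unfold aw; linarith [astar_pos hlam hA]
  obtain ⟨K, hK0, hK⟩ := perturb hlam hA haw
  have hlog : Real.log (1 - c) < 0 := Real.log_neg (by linarith) (by linarith)
  have hll : 0 < Real.log lam := Real.log_pos hlam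
  set β := 1 / (-Real.log (1 - c)) with hβ
  have hβ0 : 0 < β := by rw [hβ]; apply div_pos one_pos; linarith
  refine ⟨β + 2 / Real.log lam, by positivity, ?_⟩
  intro η' hη' L hL
  set s := (η - η') / 2 with hs
  have hs0 : 0 < s := by rw [hs]; linarith
  set D := 2 + β / s with hD
  have hD0 : 0 < D := by positivity
  refine ⟨8 * (1 + L) + 2 + K * (2 * |M| + |H|) * D ^ 2, by positivity, ?_⟩
  intro ρ z hρ hl n k hn hk hbk ρhat hr
  have hn0 : (0:ℝ) < n := by exact_mod_cast hn
  have hn1 : (1:ℝ) ≤ n := by exact_mod_cast hn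
  have hlogn : 0 ≤ Real.log n := Real.log_nonneg hn1
  set m := ⌈β * Real.log n⌉₊ with hm
  have hm1 : β * Real.log n ≤ m := Nat.le_ceil _
  have hm2 : (m:ℝ) < β * Real.log n + 1 := Nat.ceil_lt_add_one (by positivity)
  have h2l : 0 ≤ 2 / Real.log lam * Real.log n := by positivity
  have hmk : m ≤ k := Nat.ceil_le.2 (by linarith)
  obtain ⟨j0, rfl⟩ : ∃ j0, k = j0 + m := ⟨k - m, by omega⟩
  have hj0 : 2 / Real.log lam * Real.log n ≤ j0 + 1 := by
    push_cast at hbk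
    linarith
  have hpow : (n:ℝ) ^ 2 ≤ lam ^ j0 * lam := by
    rw [← pow_succ, ← Real.log_le_log_iff (by positivity) (by positivity), Real.log_pow, Real.log_pow]
    rw [div_mul_eq_mul_div, div_le_iff₀ hll] at hj0
    push_cast
    exact hj0
  obtain ⟨g, hg, hgl⟩ := approx_rho hρ hL hl (r := (n:ℝ)⁻¹) (by positivity) (inv_le_one_of_one_le₀ hn1)
  have hg' : DD ((n:ℝ) ^ 2 / 2 + astar lam Astar) g := by
    refine DD_mono ?_ hg
    have e : 1 / (2 * ((n:ℝ)⁻¹) ^ 2) = (n:ℝ) ^ 2 / 2 := by field_simp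
    rw [e]; linarith [astar_pos hlam hA]
  have hgj : DD (aw lam Astar) (arrTransfer Tarr n j0 g) := by
    refine DD_mono ?_ (arr_DD hlam hA Tarr n (by positivity) hg' j0)
    unfold aw
    have : (n:ℝ) ^ 2 / 2 / lam ^ j0 ≤ lam := by
      rw [div_le_iff₀ (by positivity)]
      nlinarith [sq_nonneg (n:ℝ)]
    linarith
  obtain ⟨t1, t2⟩ := telescope hlam hA hK Tarr n (Tarr n (j0 + m)) j0 m
    (fun i hi => close_arr hA hη hH hM (m := m) hn (by omega : j0 + i ≤ j0 + m) hk (by omega)) hgj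
  have t3 := srb_conv hlam hA hc (Tarr n (j0 + m)) hgj hr m
  have t4 := arr_l1 hlam Tarr n hρ hg.1 (j0 + m)
  rw [l1_comm ρ g] at t4
  have t5 := l1_tri (arr_density hlam Tarr n hρ (j0 + m)).1 t1.1.1 hr.1.1
  have t6 := l1_tri t1.1.1 (iter_density hlam (Tarr n (j0 + m)) hgj.1 m).1 hr.1.1
  have hθ : (1 - c) ^ m ≤ (n:ℝ)⁻¹ := by
    rw [← Real.log_le_log_iff (pow_pos (by linarith) _) (by positivity), Real.log_pow, Real.log_inv]
    rw [hβ, div_mul_eq_mul_div, one_mul, div_le_iff₀ (by linarith)] at hm1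
    linarith
  have hinv : (n:ℝ)⁻¹ ≤ (n:ℝ) ^ (-η') := by
    rw [← Real.rpow_neg_one]
    exact Real.rpow_le_rpow_of_exponent_le hn1 (by linarith [hη.2])
  have hmD : (1 + m : ℝ) ≤ D * (n:ℝ) ^ s := by
    have e1 := Real.log_le_rpow_div hn0.le hs0
    have e2 : (1:ℝ) ≤ (n:ℝ) ^ s := Real.one_le_rpow hn1 hs0.le
    have e3 : β * Real.log n ≤ β * ((n:ℝ) ^ s / s) := by gcongr
    have e4 : D * (n:ℝ) ^ s = 2 * (n:ℝ) ^ s + β * ((n:ℝ) ^ s / s) := by rw [hD]; ring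
    linarith
  have hmsq : (1 + m : ℝ) ^ 2 * (n:ℝ) ^ (-η) ≤ D ^ 2 * (n:ℝ) ^ (-η') := by
    calc (1 + m : ℝ) ^ 2 * (n:ℝ) ^ (-η) ≤ (D * (n:ℝ) ^ s) ^ 2 * (n:ℝ) ^ (-η) := by gcongr
      _ = D ^ 2 * ((n:ℝ) ^ s * (n:ℝ) ^ s * (n:ℝ) ^ (-η)) := by ring
      _ = _ := by
        rw [← Real.rpow_add hn0, ← Real.rpow_add hn0]
        congr 2
        rw [hs]; ring
  have hfin : (m:ℝ) * (K * ((2 * |M| + |H| * (1 + m)) * (n : ℝ) ^ (-η)))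
      ≤ K * (2 * |M| + |H|) * D ^ 2 * (n:ℝ) ^ (-η') := by
    have hm0 : (0:ℝ) ≤ m := Nat.cast_nonneg m
    have hp : 0 ≤ (n : ℝ) ^ (-η) := by positivity
    calc (m:ℝ) * (K * ((2 * |M| + |H| * (1 + m)) * (n : ℝ) ^ (-η)))
        ≤ (1 + m) * (K * ((2 * |M| * (1 + m) + |H| * (1 + m)) * (n : ℝ) ^ (-η))) := by
          have : 2 * |M| ≤ 2 * |M| * (1 + m) := by
            nlinarith [mul_nonneg (abs_nonneg M) hm0]
          gcongr
          linarith
      _ = K * (2 * |M| + |H|) * ((1 + m) ^ 2 * (n : ℝ) ^ (-η)) := by ring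
      _ ≤ K * (2 * |M| + |H|) * (D ^ 2 * (n : ℝ) ^ (-η')) := by gcongr
      _ = _ := by ring
  have hfin2 : 8 * (1 + L) * (n:ℝ)⁻¹ ≤ 8 * (1 + L) * (n:ℝ) ^ (-η') := by gcongr
  have : (8 * (1 + L) + 2 + K * (2 * |M| + |H|) * D ^ 2) * (n:ℝ) ^ (-η')
    = 8 * (1 + L) * (n:ℝ) ^ (-η') + 2 * (n:ℝ) ^ (-η') + K * (2 * |M| + |H|) * D ^ 2 * (n:ℝ) ^ (-η') := by
    ring
  rw [this]
  linarith

end PF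

/-- Lemma `lem:pushforward_vs_SRB`.  There is `b > 0` such that for every
`η' < η` and every probability density `ρ` Lipschitz on `J_z` with constant `L`, the
pushforward densities satisfy `‖ρ_{n,k} − ρ̂_{n,k}‖_{L¹(𝔪)} ≤ C n^{−η'}` whenever
`k ≥ b log n`, with `C` depending only on `η'` and `L`. -/
theorem statement7 {lam Astar : ℝ} (hlam : 1 < lam) (hA : 0 < Astar)
    {η : ℝ} (hη : η ∈ Set.Ioo (0 : ℝ) 1)
    (γ : ℝ → CM lam Astar) (hγ : HolderCurve η γ)
    (Tarr : ℕ → ℕ → CM lam Astar) (hT : ArrayApprox η γ Tarr) :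
    ∃ b : ℝ, 0 < b ∧
      ∀ η' : ℝ, η' < η → ∀ L : ℝ, 0 < L → ∃ C : ℝ, 0 < C ∧
        ∀ (ρ : Circle1 → ℝ) (z : Circle1), IsProbDensity ρ → LipOnArc z L ρ →
          ∀ n k : ℕ, 1 ≤ n → k ≤ n → b * Real.log n ≤ k →
            ∀ ρhat : Circle1 → ℝ, IsSRBDensity (Tarr n k) ρhat →
              l1norm (fun x => arrTransfer Tarr n k ρ x - ρhat x) ≤ C * (n : ℝ) ^ (-η') := by
  exact PF.main hlam hA hη γ hγ Tarr hT
end
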